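/- arXiv:1405.6238 — 2 statements merged into one kernel-verified Lean document; each statement's English description precedes it below -/
import Mathlib

section
/- Let I, J, K, R be integers with 2 ≤ I ≤ J ≤ K ≤ R and R ≤ (I + J + 2K − 2 − √((I−J)² + 4K))/2. Then, for F = ℝ and for F = ℂ, the CPD of an I×J×K tensor of rank R is generically unique; that is, the set {(A,B,C) ∈ F^{I×R}×F^{J×R}×F^{K×R} : the CPD of the tensor [A,B,C]_R is not unique} has Lebesgue measure zero. -/
/-!
Put `m = R - K + 1`. The bound on `R` says exactly that `m < I` and `K ≤ (I - m) * (J - m)`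
(`card_bound`).

*Generic triples.* Almost every `(A, B, C)` has columns in general position (`GenPos`), and
moreover satisfies: for every nonzero functional `f` on `F^K` such that at least `I` of the values
`f (c_r)` are nonzero, the contracted matrix `Σ f(c_r) a_r b_rᵀ` has rank greater than `m`. Indeed
a triple violating the second condition lies in the range of one of finitely many polynomial maps
`degMap` (`mem_range_degMap`). The source of `degMap` has dimension smaller by
`(I - m) * (J - m) - (K - 1) > 0` than the space of triples: a rank at most `m` costs
`(I - m) * (J - m)` parameters, and the choice of `f` up to scaling gains only `K - 1`. The range
of a differentiable map out of a space of smaller dimension is a null set (`null_range`).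

*Uniqueness for such triples.* Let `Σ a'_r b'_r c'_r`, with at most `R` terms, be another
decomposition of the same tensor (`decomposition_unique`). If `f ≠ 0` has at most `m` nonzero
values on the `c'_r`, the contraction by `f` has rank at most `m`, so fewer than `I` of the values
`f (c_r)` are nonzero; the corresponding `a_r` and `b_r` are independent, so at most `m` of them
are, while general position of `C` gives at least `R - K + 1 = m`. Kruskal's permutation lemma
(`permutation_lemma`) then shows that the `c'_r` are the `c_r` up to order and scaling. Finally,
for an `m`-element set `G` of indices there is an `f` which is nonzero on `c_r` exactly for `r ∈ G`,
and contracting by it gives `span a_G = span a'_G`; intersecting over the `m`-subsets containing `r`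
of an `(m+1)`-set gives `a'_r ∥ a_r`, and likewise for `b` (`terms_eq_of_contractions`).
-/

open MeasureTheory

noncomputable section

/-- The tensor `[A,B,C]_R` with entries `t_{ijk} = Σ_r A i r * B j r * C k r`. -/
def cpdSum {F : Type*} [CommRing F] {I J K R : ℕ}
    (A : Fin I → Fin R → F) (B : Fin J → Fin R → F) (C : Fin K → Fin R → F) :
    Fin I → Fin J → Fin K → F :=
  fun i j k => ∑ r : Fin R, A i r * B j r * C k r

/-- `T` is the sum of the `R` rank-1 terms `a_r ∘ b_r ∘ c_r` with all vectors nonzero. -/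
def IsPD {F : Type*} [CommRing F] {I J K : ℕ} (T : Fin I → Fin J → Fin K → F) (R : ℕ)
    (a : Fin R → Fin I → F) (b : Fin R → Fin J → F) (c : Fin R → Fin K → F) : Prop :=
  (∀ r, a r ≠ 0) ∧ (∀ r, b r ≠ 0) ∧ (∀ r, c r ≠ 0) ∧
    ∀ i j k, T i j k = ∑ r : Fin R, a r i * b r j * c r k

/-- The rank of a third-order tensor: the minimal number of rank-1 terms. -/
def tensorRank {F : Type*} [CommRing F] {I J K : ℕ} (T : Fin I → Fin J → Fin K → F) : ℕ :=
  sInf {R | ∃ a b c, IsPD T R a b c}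

/-- The CPD of `T` is unique: any two decompositions of `T` into `tensorRank T` nonzero
rank-1 terms coincide up to permutation of the rank-1 terms. -/
def CPDUnique {F : Type*} [CommRing F] {I J K : ℕ} (T : Fin I → Fin J → Fin K → F) : Prop :=
  ∀ (a a' : Fin (tensorRank T) → Fin I → F) (b b' : Fin (tensorRank T) → Fin J → F)
    (c c' : Fin (tensorRank T) → Fin K → F),
    IsPD T (tensorRank T) a b c → IsPD T (tensorRank T) a' b' c' →
    ∃ σ : Equiv.Perm (Fin (tensorRank T)),
      ∀ r i j k, a r i * b r j * c r k = a' (σ r) i * b' (σ r) j * c' (σ r) k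

/-- The CPD of an `I×J×K` tensor of rank `R` is generically unique over `F`:
the set of triples `(A,B,C)` for which the CPD of `[A,B,C]_R` is not unique has
Lebesgue measure zero. -/
def CPDGenericallyUnique (F : Type*) [CommRing F] [MeasureSpace F] (I J K R : ℕ) : Prop :=
  volume {p : (Fin I → Fin R → F) × (Fin J → Fin R → F) × (Fin K → Fin R → F) |
    ¬ CPDUnique (cpdSum p.1 p.2.1 p.2.2)} = 0


set_option linter.unusedSectionVars false

/-! ### Families in general position -/

section
variable {F V ι ι' : Type*} [Fintype ι'] [Fintype ι] [Field F] [AddCommGroup V] [Module F V]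
  [FiniteDimensional F V]

/-- The family `v` is in general position up to size `n`: any at most `n` of its members are linearly
independent. -/
def GenPos (F : Type*) {V ι : Type*} [Field F] [AddCommGroup V] [Module F V]
    (v : ι → V) (n : ℕ) : Prop :=
  ∀ S : Finset ι, S.card ≤ n → LinearIndepOn F v (S : Set ι)

theorem finrank_span_image_le (v : ι → V) (S : Finset ι) :
    Module.finrank F (Submodule.span F (v '' S)) ≤ S.card := by
  classical
  rw [← Finset.coe_image]
  exact (finrank_span_finset_le_card _).trans Finset.card_image_le

theorem card_le_of_forall_mem {v : ι → V} {S : Finset ι} (h : LinearIndepOn F v (S : Set ι))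
    {W : Submodule F V} (hW : ∀ i ∈ S, v i ∈ W) : S.card ≤ Module.finrank F W := by
  have h1 := finrank_span_eq_card h.linearIndependent
  have h2 : Set.range (fun x : (S : Set ι) => v x) = v '' S := by
    ext; simp
  rw [h2] at h1
  have h3 : Submodule.span F (v '' S) ≤ W := by
    rw [Submodule.span_le]
    rintro _ ⟨i, hi, rfl⟩
    exact hW i hi
  have := Submodule.finrank_mono h3
  simp at h1
  omega

theorem finrank_span_image_eq {v : ι → V} {S : Finset ι} (h : LinearIndepOn F v (S : Set ι)) :
    Module.finrank F (Submodule.span F (v '' S)) = S.card :=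
  le_antisymm (finrank_span_image_le v S)
    (card_le_of_forall_mem h fun i hi => Submodule.subset_span ⟨i, hi, rfl⟩)

open Classical in
theorem exists_dual_of_card_lt (v : ι → V) (S : Finset ι) (h : S.card < Module.finrank F V) :
    ∃ f : V →ₗ[F] F, f ≠ 0 ∧ ∀ i ∈ S, f (v i) = 0 := by
  have hlt : Submodule.span F (v '' S) < ⊤ := by
    apply Submodule.lt_top_of_finrank_lt_finrank
    exact (finrank_span_image_le v S).trans_lt h
  obtain ⟨f, hf, hk⟩ := Submodule.exists_le_ker_of_lt_top _ hlt
  exact ⟨f, hf, fun i hi => hk (Submodule.subset_span ⟨i, hi, rfl⟩)⟩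

open Classical in
/-- A hyperplane contains fewer than `dim V` members of a family in general position. -/
theorem GenPos.card_zero_lt {v : ι → V} (h : GenPos F v (Module.finrank F V)) {f : V →ₗ[F] F}
    (hf : f ≠ 0) : (Finset.univ.filter fun i => f (v i) = 0).card < Module.finrank F V := by
  by_contra hc
  obtain ⟨S, hS, hcard⟩ := Finset.exists_subset_card_eq (not_lt.1 hc)
  have h1 := card_le_of_forall_mem (h S hcard.le) (W := LinearMap.ker f) fun i hi => by
    simpa using hS hi
  have h2 : LinearMap.ker f < ⊤ := lt_top_iff_ne_top.2 fun h => hf (LinearMap.ker_eq_top.1 h)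
  have := Submodule.finrank_lt h2.ne
  omega

open Classical in
theorem genPos_of_zero_lt {v : ι → V} (hc : Module.finrank F V ≤ Fintype.card ι)
    (h : ∀ f : V →ₗ[F] F, f ≠ 0 → (Finset.univ.filter fun i => f (v i) = 0).card < Module.finrank F V) :
    GenPos F v (Module.finrank F V) := by
  intro S hS
  obtain ⟨T, hST, hT⟩ := Finset.exists_superset_card_eq hS hc
  suffices LinearIndepOn F v (T : Set ι) from this.mono (by exact_mod_cast hST)
  refine linearIndependent_of_top_le_span_of_card_eq_finrank (b := fun x : (T : Set ι) => v x) ?_ ?_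
  · by_contra htop
    obtain ⟨f, hf, hk⟩ := Submodule.exists_le_ker_of_lt_top _ (lt_top_iff_ne_top.2 fun h => htop h.ge)
    have : T ⊆ Finset.univ.filter fun i => f (v i) = 0 := fun i hi => by
      simpa using hk (Submodule.subset_span ⟨⟨i, hi⟩, rfl⟩)
    have := Finset.card_le_card this
    have := h f hf
    omega
  · simpa using hT

theorem not_mem_span_of_genPos {v : ι → V} {n : ℕ} (h : GenPos F v n) {S : Finset ι} {i : ι}
    (hi : i ∉ S) (hS : S.card < n) : v i ∉ Submodule.span F (v '' S) := by
  classical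
  have := h (insert i S) (by rw [Finset.card_insert_of_notMem hi]; omega)
  rw [Finset.coe_insert] at this
  exact this.notMem_span_of_insert (by simpa using hi)

/-! ### Kruskal's permutation lemma -/

open Classical in
/-- The descending step in the permutation lemma: if the span of any `j + 1` of the `c'` contains
exactly `j + 1` of the `c`, then the span of any `j` of the `c'` contains exactly `j` of the `c`.
The spans obtained by adding one vector `c' r` to a fixed `j`-element set meet only in the span of
that set, so the vectors `c i` which they contain outside it are counted without repetition; there
would be too many of them if the smaller span contained fewer than `j`. -/
theorem card_mem_span_step {c : ι → V} {c' : ι' → V} (hK : Module.finrank F V ≤ Fintype.card ι')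
    (hcard : Fintype.card ι' = Fintype.card ι)
    (hc : GenPos F c (Module.finrank F V)) (hc' : GenPos F c' (Module.finrank F V)) {j : ℕ}
    (hj : j + 2 ≤ Module.finrank F V)
    (ih : ∀ S : Finset ι', S.card = j + 1 →
      (Finset.univ.filter fun i => c i ∈ Submodule.span F (c' '' S)).card = j + 1)
    (S : Finset ι') (hS : S.card = j) :
      (Finset.univ.filter fun i => c i ∈ Submodule.span F (c' '' S)).card = j := by
  set U := Finset.univ.filter fun i => c i ∈ Submodule.span F (c' '' S) with hU
  have hle : U.card ≤ j := by
    by_contra hlt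
    obtain ⟨S', hS', hcard'⟩ := Finset.exists_subset_card_eq (show j + 1 ≤ U.card by omega)
    have h1 := card_le_of_forall_mem (hc S' (by omega)) (W := Submodule.span F (c' '' S))
      fun i hi => by simpa [hU] using hS' hi
    have := finrank_span_image_le (F := F) c' S
    omega
  let X : ι' → Finset ι := fun r =>
    (Finset.univ.filter fun i => c i ∈ Submodule.span F (c' '' (insert r S : Finset ι'))) \ U
  have hX : ∀ r ∈ Sᶜ, (X r).card = j + 1 - U.card := by
    intro r hr
    rw [Finset.card_sdiff_of_subset, ih]
    · rw [Finset.card_insert_of_notMem (by simpa using hr), hS]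
    · intro i hi
      simp only [hU, Finset.mem_filter, Finset.mem_univ, true_and] at hi ⊢
      exact Submodule.span_mono (Set.image_mono (by simp)) hi
  have hdis : ∀ r ∈ Sᶜ, ∀ r' ∈ Sᶜ, r ≠ r' → Disjoint (X r) (X r') := by
    intro r hr r' hr' hne
    rw [Finset.disjoint_left]
    intro i hi hi'
    simp only [X, hU, Finset.mem_sdiff, Finset.mem_filter, Finset.mem_univ, true_and,
      Finset.coe_insert, Set.image_insert_eq] at hi hi'
    have h1 := mem_span_insert_exchange hi.1 hi.2
    have h2 : c' r ∈ Submodule.span F (c' '' (insert r' S : Finset ι')) := by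
      rw [Finset.coe_insert, Set.image_insert_eq]
      refine Submodule.span_le.2 ?_ h1
      rintro x (rfl | hx)
      · exact hi'.1
      · exact Submodule.subset_span (Or.inr hx)
    refine not_mem_span_of_genPos hc' (i := r) ?_ ?_ h2
    · simp only [Finset.mem_insert, not_or]
      exact ⟨hne, by simpa using hr⟩
    · have := Finset.card_insert_le r' S
      omega
  have hsum : (Sᶜ.biUnion X).card = (Fintype.card ι' - j) * (j + 1 - U.card) := by
    rw [Finset.card_biUnion hdis, Finset.sum_congr rfl hX, Finset.sum_const, Finset.card_compl, hS,
      smul_eq_mul]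
  have hsub : (Sᶜ.biUnion X).card ≤ Fintype.card ι - U.card := by
    rw [← Finset.card_compl]
    apply Finset.card_le_card
    intro i hi
    simp only [Finset.mem_biUnion, X, Finset.mem_sdiff] at hi
    obtain ⟨r, -, -, h⟩ := hi
    simpa using h
  rw [hsum] at hsub
  by_contra hne
  obtain ⟨d, hd⟩ : ∃ d, j = U.card + d + 1 := ⟨j - U.card - 1, by omega⟩
  obtain ⟨n, hn⟩ : ∃ n, Fintype.card ι' = j + n + 2 := ⟨Fintype.card ι' - j - 2, by omega⟩
  have e1 : Fintype.card ι' - j = n + 2 := by omega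
  have e2 : j + 1 - U.card = d + 2 := by omega
  have e3 : Fintype.card ι - U.card = d + n + 3 := by omega
  rw [e1, e2, e3] at hsub
  nlinarith

open Classical in
/-- Kruskal's permutation lemma, for `c` in general position and `m = card ι - dim V + 1`: if every
nonzero functional with at most `m` nonzero values on `c'` has exactly `m` nonzero values on both
`c'` and `c`, then `c'` agrees with `c` up to a bijection of the indices and scaling. -/
theorem permutation_lemma {c : ι → V} {c' : ι' → V} {m : ℕ} (hm : Fintype.card ι + 1 = Module.finrank F V + m)
    (hm1 : 1 ≤ m) (h2 : 2 ≤ Module.finrank F V) (hle : Fintype.card ι' ≤ Fintype.card ι)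
    (hc : GenPos F c (Module.finrank F V))
    (H : ∀ f : V →ₗ[F] F, f ≠ 0 → (Finset.univ.filter fun i => f (c' i) ≠ 0).card ≤ m →
      (Finset.univ.filter fun i => f (c' i) ≠ 0).card = m ∧
      (Finset.univ.filter fun i => f (c i) ≠ 0).card = m) :
    ∃ e : ι' ≃ ι, ∀ r, ∃ t : F, c' r = t • c (e r) := by
  have hsplit : ∀ f : V →ₗ[F] F, (Finset.univ.filter fun i => f (c i) = 0).card +
      (Finset.univ.filter fun i => f (c i) ≠ 0).card = Fintype.card ι := fun f =>
    Finset.card_filter_add_card_filter_not _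
  have hsplit' : ∀ f : V →ₗ[F] F, (Finset.univ.filter fun i => f (c' i) = 0).card +
      (Finset.univ.filter fun i => f (c' i) ≠ 0).card = Fintype.card ι' := fun f =>
    Finset.card_filter_add_card_filter_not _
  have hcard : Fintype.card ι' = Fintype.card ι := by
    obtain ⟨S, hS⟩ : ∃ S : Finset ι', S.card = min (Module.finrank F V - 1) (Fintype.card ι') := by
      obtain ⟨S, -, hS⟩ := Finset.exists_subset_card_eq
        (s := (Finset.univ : Finset ι')) (n := min (Module.finrank F V - 1) (Fintype.card ι'))
        (by simp)
      exact ⟨S, hS⟩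
    obtain ⟨f, hf, hz⟩ := exists_dual_of_card_lt (F := F) c' S (by omega)
    have hSz : S.card ≤ (Finset.univ.filter fun i => f (c' i) = 0).card :=
      Finset.card_le_card fun i hi => by simpa using hz i hi
    have := hsplit' f
    have := H f hf (by omega)
    omega
  have hK : Module.finrank F V ≤ Fintype.card ι' := by omega
  have hc' : GenPos F c' (Module.finrank F V) := by
    refine genPos_of_zero_lt hK fun f hf => ?_
    by_contra hlt
    have := hsplit' f
    have := H f hf (by omega)
    omega
  -- The span of any `j` of the `c'` contains exactly `j` of the `c`, for `1 ≤ j ≤ dim V - 1`; here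
  -- `j = dim V - 1 - d`, and only `j = 1` is needed afterwards.
  have hP : ∀ d, d + 2 ≤ Module.finrank F V → ∀ S : Finset ι', S.card = Module.finrank F V - 1 - d →
      (Finset.univ.filter fun i => c i ∈ Submodule.span F (c' '' S)).card
        = Module.finrank F V - 1 - d := by
    intro d
    induction d with
    | zero =>
      intro _ S hS
      obtain ⟨f, hf, hz⟩ := exists_dual_of_card_lt (F := F) c' S (by omega)
      have hle : Submodule.span F (c' '' S) ≤ LinearMap.ker f := by
        rw [Submodule.span_le]
        rintro _ ⟨i, hi, rfl⟩
        exact hz i hi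
      have hlt : LinearMap.ker f < ⊤ :=
        lt_top_iff_ne_top.2 fun h => hf (LinearMap.ker_eq_top.1 h)
      have := Submodule.finrank_lt hlt.ne
      have heq := Submodule.eq_of_le_of_finrank_le hle
        (by rw [finrank_span_image_eq (hc' S (by omega))]; omega)
      have hSz : S.card ≤ (Finset.univ.filter fun i => f (c' i) = 0).card :=
        Finset.card_le_card fun i hi => by simpa using hz i hi
      have h3 := hsplit' f
      have h4 := H f hf (by omega)
      have h5 := hsplit f
      simp only [heq, LinearMap.mem_ker]
      omega
    | succ d ih =>
      intro hd S hS
      have e : Module.finrank F V - 1 - d = (Module.finrank F V - 1 - (d + 1)) + 1 := by omega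
      refine card_mem_span_step hK hcard hc hc' (by omega) (fun S' hS' => ?_) S hS
      rw [← e]
      exact ih (by omega) S' (by omega)
  have h1 : ∀ r, ∃ i, c i ∈ Submodule.span F {c' r} := by
    intro r
    have := hP (Module.finrank F V - 2) (by omega) {r} (by simp; omega)
    obtain ⟨i, hi⟩ := Finset.card_pos.1 (show 0 < Finset.card _ by rw [this]; omega)
    exact ⟨i, by simpa using hi⟩
  choose g hg using h1
  have hg' : ∀ r, ∃ t : F, c' r = t • c (g r) := by
    intro r
    obtain ⟨t, ht⟩ := Submodule.mem_span_singleton.1 (hg r)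
    have hne : c (g r) ≠ 0 := by
      have := hc {g r} (by simp; omega)
      exact this.ne_zero (i := g r) (by simp)
    have ht0 : t ≠ 0 := by
      rintro rfl
      exact hne (by rw [← ht, zero_smul])
    exact ⟨t⁻¹, by rw [← ht, smul_smul, inv_mul_cancel₀ ht0, one_smul]⟩
  have hinj : Function.Injective g := by
    intro r r' hrr
    by_contra hne
    obtain ⟨t, ht⟩ := hg' r
    have h3 : c' r ∈ Submodule.span F (c' '' ({r'} : Finset ι')) := by
      rw [ht, hrr]
      simpa using Submodule.smul_mem _ t (hg r')
    exact not_mem_span_of_genPos hc' (by simpa using hne) (by simp; omega) h3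
  exact ⟨Equiv.ofBijective g ((Fintype.bijective_iff_injective_and_card g).2 ⟨hinj, hcard⟩), hg'⟩
end

/-! ### Uniqueness from contractions -/

section
variable {F V₁ V₂ V ι ι' : Type*} [Field F] [AddCommGroup V₁] [Module F V₁] [FiniteDimensional F V₁]
  [AddCommGroup V₂] [Module F V₂] [FiniteDimensional F V₂]
  [AddCommGroup V] [Module F V] [FiniteDimensional F V] [Fintype ι] [Fintype ι']

theorem exists_dual_separating {b : ι → V₂} {G : Finset ι} (hb : LinearIndepOn F b (G : Set ι))
    {g : ι} (hg : g ∈ G) : ∃ φ : V₂ →ₗ[F] F, φ (b g) ≠ 0 ∧ ∀ r ∈ G, r ≠ g → φ (b r) = 0 := by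
  obtain ⟨φ, h1, h2⟩ := Submodule.exists_le_ker_of_notMem (hb.notMem_span hg)
  exact ⟨φ, h1, fun r hr hne => h2 (Submodule.subset_span ⟨r, ⟨hr, hne⟩, rfl⟩)⟩

/-- If the `b r`, `r ∈ G`, are independent, a subspace containing the column space of
`Σ_{r ∈ G} w_r a_r b_rᵀ` contains every `a g` with `g ∈ G`. -/
theorem mem_of_contraction {a : ι → V₁} {b : ι → V₂} {G : Finset ι} {w : ι → F}
    (hb : LinearIndepOn F b (G : Set ι)) (hw : ∀ r, w r ≠ 0 ↔ r ∈ G) {W : Submodule F V₁}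
    (hW : ∀ φ : V₂ →ₗ[F] F, ∑ r, (w r * φ (b r)) • a r ∈ W) {g : ι} (hg : g ∈ G) : a g ∈ W := by
  obtain ⟨φ, h1, h2⟩ := exists_dual_separating hb hg
  have := hW φ
  rw [Finset.sum_eq_single g] at this
  · exact (W.smul_mem_iff (mul_ne_zero ((hw g).2 hg) h1)).1 this
  · intro r _ hne
    by_cases hr : r ∈ G
    · rw [h2 r hr hne, mul_zero, zero_smul]
    · rw [not_not.1 (mt (hw r).1 hr), zero_mul, zero_smul]
  · simp

theorem contraction_mem_span (a : ι → V₁) (w x : ι → F) {G : Finset ι} (hw : ∀ r, w r ≠ 0 → r ∈ G) :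
    ∑ r, (w r * x r) • a r ∈ Submodule.span F (a '' G) := by
  refine Submodule.sum_mem _ fun r _ => ?_
  by_cases hr : w r = 0
  · simp [hr]
  · exact Submodule.smul_mem _ _ (Submodule.subset_span ⟨r, hw r hr, rfl⟩)

open Classical in
/-- For `c` in general position, any index set of size `m = card ι - dim V + 1` is the support of
some functional on `c`: the complement has `dim V - 1` members and spans a hyperplane. -/
theorem exists_dual_support {c : ι → V} {m : ℕ} (hm : Fintype.card ι + 1 = Module.finrank F V + m)
    (hc : GenPos F c (Module.finrank F V)) (G : Finset ι) (hG : G.card = m) :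
    ∃ f : V →ₗ[F] F, ∀ r, f (c r) ≠ 0 ↔ r ∈ G := by
  have hGc := Finset.card_compl G
  have hGle := Finset.card_le_univ G
  obtain ⟨f, hf, hz⟩ : ∃ f : V →ₗ[F] F, f ≠ 0 ∧ ∀ i ∈ Gᶜ, f (c i) = 0 := by
    by_cases hV : 0 < Module.finrank F V
    · exact exists_dual_of_card_lt (F := F) c Gᶜ (by omega)
    · omega
  have hlt := hc.card_zero_lt hf
  have hsub : Gᶜ ⊆ Finset.univ.filter fun i => f (c i) = 0 := fun i hi => by simpa using hz i hi
  have heq := Finset.eq_of_subset_of_card_le hsub (by omega)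
  refine ⟨f, fun r => ?_⟩
  have := Finset.ext_iff.1 heq r
  simp at this
  tauto

open Classical in
/-- Two decompositions with the same third factor `c` have parallel first factors: `a' r` lies in
the span of `a` over each `m`-set of indices containing `r`, and those spans meet in the line
through `a r`. -/
theorem parallel_of_contractions {a a' : ι → V₁} {b b' : ι → V₂} {c : ι → V} {m : ℕ}
    (hm : Fintype.card ι + 1 = Module.finrank F V + m) (hm1 : 1 ≤ m) (h2 : 2 ≤ Module.finrank F V)
    (ha : GenPos F a (m + 1)) (hb : GenPos F b m) (hc : GenPos F c (Module.finrank F V))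
    (h : ∀ (f : V →ₗ[F] F) (φ : V₂ →ₗ[F] F),
      ∑ r, (f (c r) * φ (b r)) • a r = ∑ r, (f (c r) * φ (b' r)) • a' r) (r : ι) :
    ∃ α : F, a' r = α • a r := by
  have hG : ∀ G : Finset ι, G.card = m → r ∈ G → a' r ∈ Submodule.span F (a '' G) := by
    intro G hGm hr
    obtain ⟨f, hf⟩ := exists_dual_support hm hc G hGm
    have hle : Submodule.span F (a '' G) ≤ Submodule.span F (a' '' G) := by
      rw [Submodule.span_le]
      rintro _ ⟨g, hg, rfl⟩
      refine mem_of_contraction (hb G hGm.le) hf (fun φ => ?_) hg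
      rw [h]
      exact contraction_mem_span a' _ _ fun r => (hf r).1
    have heq := Submodule.eq_of_le_of_finrank_le hle (by
      rw [finrank_span_image_eq (ha G (by omega))]
      exact finrank_span_image_le a' G)
    rw [heq]
    exact Submodule.subset_span ⟨r, hr, rfl⟩
  obtain ⟨H, hrH, hH⟩ := Finset.exists_superset_card_eq (s := {r}) (n := m + 1) (by simp) (by omega)
  have hr : r ∈ H := hrH (by simp)
  have hspan : ∀ h ∈ H, h ≠ r → a' r ∈ Submodule.span F (a '' (H.erase h : Finset ι)) :=
    fun h hh hne => hG _ (by rw [Finset.card_erase_of_mem hh]; omega)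
      (Finset.mem_erase.2 ⟨hne.symm, hr⟩)
  have hmem : a' r ∈ Submodule.span F (a '' (H : Finset ι)) := by
    obtain ⟨h₀, hh₀, hne⟩ := Finset.exists_mem_ne (show 1 < H.card by omega) r
    exact Submodule.span_mono (Set.image_mono (by simp)) (hspan h₀ hh₀ hne)
  rw [Submodule.mem_span_image_finset_iff_exists_fun] at hmem
  obtain ⟨w, hw⟩ := hmem
  refine ⟨w ⟨r, hr⟩, ?_⟩
  rw [← hw, Finset.sum_eq_single ⟨r, hr⟩]
  · rintro ⟨s, hs⟩ - hne
    have hsr : s ≠ r := fun h => hne (Subtype.ext h)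
    obtain ⟨φ, h1, h2⟩ := exists_dual_separating (ha H hH.le) hs
    have h3 : φ (a' r) = 0 := by
      have : Submodule.span F (a '' (H.erase s : Finset ι)) ≤ LinearMap.ker φ := by
        rw [Submodule.span_le]
        rintro _ ⟨g, hg, rfl⟩
        have hg' := Finset.mem_erase.1 (Finset.mem_coe.1 hg)
        exact h2 g hg'.2 hg'.1
      exact this (hspan s hs hsr)
    rw [← hw, map_sum, Finset.sum_eq_single ⟨s, hs⟩] at h3
    · simp only [map_smul, smul_eq_mul, mul_eq_zero, h1, or_false] at h3
      rw [h3, zero_smul]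
    · rintro ⟨t, ht⟩ - hne'
      rw [map_smul, h2 t ht fun h => hne' (Subtype.ext h), smul_zero]
    · simp
  · simp

/-- Two decompositions with the same third factor `c` have the same terms: the scalars relating the
first and second factors multiply to one. -/
theorem terms_eq_of_contractions {a a' : ι → V₁} {b b' : ι → V₂} {c : ι → V} {m : ℕ}
    (hm : Fintype.card ι + 1 = Module.finrank F V + m) (hm1 : 1 ≤ m) (h2 : 2 ≤ Module.finrank F V)
    (ha : GenPos F a (m + 1)) (hb : GenPos F b (m + 1)) (hc : GenPos F c (Module.finrank F V))
    (h : ∀ (f : V →ₗ[F] F) (φ : V₂ →ₗ[F] F),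
      ∑ r, (f (c r) * φ (b r)) • a r = ∑ r, (f (c r) * φ (b' r)) • a' r)
    (h' : ∀ (f : V →ₗ[F] F) (φ : V₁ →ₗ[F] F),
      ∑ r, (f (c r) * φ (a r)) • b r = ∑ r, (f (c r) * φ (a' r)) • b' r) (r : ι) :
    ∃ α β : F, a' r = α • a r ∧ b' r = β • b r ∧ α * β = 1 := by
  have ha' : GenPos F a m := fun S hS => ha S (by omega)
  have hb' : GenPos F b m := fun S hS => hb S (by omega)
  choose α hα using parallel_of_contractions hm hm1 h2 ha hb' hc h
  choose β hβ using parallel_of_contractions hm hm1 h2 hb ha' hc h'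
  refine ⟨α r, β r, hα r, hβ r, ?_⟩
  obtain ⟨G, hrG, hG⟩ := Finset.exists_superset_card_eq (s := {r}) (n := m) (by simpa using hm1) (by omega)
  have hr : r ∈ G := hrG (by simp)
  obtain ⟨f, hf⟩ := exists_dual_support hm hc G hG
  obtain ⟨φ, h3, h4⟩ := exists_dual_separating (hb' G hG.le) hr
  have hzero : ∀ s, s ≠ r → f (c s) * φ (b s) = 0 := by
    intro s hs
    by_cases hsG : s ∈ G
    · rw [h4 s hsG hs, mul_zero]
    · rw [not_not.1 (mt (hf s).1 hsG), zero_mul]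
  have h5 := h f φ
  rw [Finset.sum_eq_single r (fun s _ hs => by rw [hzero s hs, zero_smul]) (by simp),
    Finset.sum_eq_single r (fun s _ hs => by
      rw [hβ, map_smul, smul_eq_mul, mul_left_comm, hzero s hs, mul_zero, zero_smul]) (by simp),
    hα, hβ, map_smul, smul_eq_mul, smul_smul] at h5
  have har : a r ≠ 0 := (ha' {r} (by simpa using hm1)).ne_zero (i := r) (by simp)
  have h6 := smul_left_injective F har h5
  have h7 : f (c r) * φ (b r) ≠ 0 := mul_ne_zero ((hf r).2 hr) h3
  apply mul_left_cancel₀ h7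
  rw [mul_one]
  linear_combination -h6

open Classical in
/-- A decomposition whose factors are in general position, and all of whose contractions with at
least `dim V₁` nonzero weights have rank greater than `m` (hypothesis `hG`, where `W` plays the role
of the column space), is the only one with at most that many terms. -/
theorem decomposition_unique {a : ι → V₁} {b : ι → V₂} {c : ι → V} {a' : ι' → V₁} {b' : ι' → V₂}
    {c' : ι' → V} {m : ℕ}
    (hm : Fintype.card ι + 1 = Module.finrank F V + m) (hm1 : 1 ≤ m) (h2 : 2 ≤ Module.finrank F V)
    (hmI : m + 1 ≤ Module.finrank F V₁) (hIJ : Module.finrank F V₁ ≤ Module.finrank F V₂)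
    (hle : Fintype.card ι' ≤ Fintype.card ι)
    (ha : GenPos F a (Module.finrank F V₁)) (hb : GenPos F b (Module.finrank F V₂))
    (hc : GenPos F c (Module.finrank F V))
    (hG : ∀ f : V →ₗ[F] F, f ≠ 0 →
      Module.finrank F V₁ ≤ (Finset.univ.filter fun r => f (c r) ≠ 0).card →
      ∀ W : Submodule F V₁, (∀ φ : V₂ →ₗ[F] F, ∑ r, (f (c r) * φ (b r)) • a r ∈ W) →
        m < Module.finrank F W)
    (h : ∀ (f : V →ₗ[F] F) (φ : V₂ →ₗ[F] F),
      ∑ r, (f (c r) * φ (b r)) • a r = ∑ r, (f (c' r) * φ (b' r)) • a' r)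
    (h' : ∀ (f : V →ₗ[F] F) (φ : V₁ →ₗ[F] F),
      ∑ r, (f (c r) * φ (a r)) • b r = ∑ r, (f (c' r) * φ (a' r)) • b' r) :
    ∃ e : ι' ≃ ι, ∀ r, ∃ α β t : F, a' r = α • a (e r) ∧ b' r = β • b (e r) ∧ c' r = t • c (e r) ∧
      α * β * t = 1 := by
  obtain ⟨e, he⟩ : ∃ e : ι' ≃ ι, ∀ r, ∃ t : F, c' r = t • c (e r) := by
    refine permutation_lemma hm hm1 h2 hle hc fun f hf hcard => ?_
    set G' := Finset.univ.filter fun i => f (c' i) ≠ 0 with hG'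
    set G := Finset.univ.filter fun i => f (c i) ≠ 0 with hGdef
    have hsplit : (Finset.univ.filter fun i => f (c i) = 0).card + G.card = Fintype.card ι :=
      Finset.card_filter_add_card_filter_not _
    have hlt := hc.card_zero_lt hf
    have hW : ∀ φ : V₂ →ₗ[F] F, ∑ r, (f (c r) * φ (b r)) • a r ∈ Submodule.span F (a' '' G') := by
      intro φ
      rw [h]
      exact contraction_mem_span a' _ _ fun r hr => by simpa [hG'] using hr
    have hfin := finrank_span_image_le (F := F) a' G'
    have hsmall : G.card < Module.finrank F V₁ := by
      by_contra hge
      have := hG f hf (not_lt.1 hge) _ hW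
      omega
    have := card_le_of_forall_mem (ha G hsmall.le) (W := Submodule.span F (a' '' G')) fun g hg =>
      mem_of_contraction (hb G (by omega)) (w := fun r => f (c r)) (by simp [hGdef]) hW hg
    omega
  choose t ht using he
  refine ⟨e, fun r => ?_⟩
  have key := terms_eq_of_contractions (a' := fun i => t (e.symm i) • a' (e.symm i))
    (b' := fun i => b' (e.symm i)) hm hm1 h2 (fun S hS => ha S (by omega))
    (fun S hS => hb S (by omega)) hc
    (fun f φ => by
      rw [h, ← Equiv.sum_comp e.symm]
      refine Finset.sum_congr rfl fun i _ => ?_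
      rw [ht, e.apply_symm_apply, smul_smul, map_smul, smul_eq_mul]
      congr 1
      ring)
    (fun f φ => by
      rw [h', ← Equiv.sum_comp e.symm]
      refine Finset.sum_congr rfl fun i _ => ?_
      rw [ht, e.apply_symm_apply, map_smul, map_smul, smul_eq_mul, smul_eq_mul]
      congr 1
      ring) (e r)
  obtain ⟨α, β, h3, h4, h5⟩ := key
  simp only [e.symm_apply_apply] at h3 h4
  have ht0 : t r ≠ 0 := by
    intro h0
    rw [h0, zero_smul] at h3
    have har : a (e r) ≠ 0 := (ha {e r} (by simp; omega)).ne_zero (i := e r) (by simp)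
    have hα : α = 0 := (smul_eq_zero.1 h3.symm).resolve_right har
    simp [hα] at h5
  refine ⟨(t r)⁻¹ * α, β, t r, ?_, h4, ht r, ?_⟩
  · rw [← smul_smul, ← h3, smul_smul, inv_mul_cancel₀ ht0, one_smul]
  · field_simp
    exact h5
end

/-! ### Null sets as images of spaces of smaller dimension -/

/-- The easy case of Sard's theorem: composing `f` with a linear surjection `E' → E` exhibits its
range as the image of a self-map of `E'` with everywhere singular derivative. -/
theorem null_range {E E' : Type*} [NormedAddCommGroup E] [NormedSpace ℝ E] [FiniteDimensional ℝ E]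
    [NormedAddCommGroup E'] [NormedSpace ℝ E'] [FiniteDimensional ℝ E'] [MeasurableSpace E']
    [BorelSpace E'] (μ : Measure E') [μ.IsAddHaarMeasure] (f : E → E') (hf : Differentiable ℝ f)
    (h : Module.finrank ℝ E < Module.finrank ℝ E') : μ (Set.range f) = 0 := by
  let e : E' ≃ₗ[ℝ] E × (Fin (Module.finrank ℝ E' - Module.finrank ℝ E) → ℝ) :=
    LinearEquiv.ofFinrankEq _ _ (by simp; omega)
  let L : E' →L[ℝ] E := LinearMap.toContinuousLinearMap (LinearMap.fst ℝ E _ ∘ₗ e.toLinearMap)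
  have hL : Function.Surjective L := fun x => ⟨e.symm (x, 0), by simp [L]⟩
  have hr : Set.range f = (fun x => f (L x)) '' Set.univ := by
    rw [Set.image_univ]
    exact (hL.range_comp f).symm
  rw [hr]
  refine addHaar_image_eq_zero_of_det_fderivWithin_eq_zero μ
    (f' := fun x => (fderiv ℝ f (L x)).comp L) (fun x _ => ?_) (fun x _ => ?_)
  · exact ((hf (L x)).hasFDerivAt.comp x L.hasFDerivAt).hasFDerivWithinAt
  · by_contra hd
    have hu : Function.Injective ((fderiv ℝ f (L x)).comp L) :=
      (LinearMap.equivOfDetNeZero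
        (((fderiv ℝ f (L x)).comp L : E' →L[ℝ] E') : E' →ₗ[ℝ] E') hd).injective
    have : Function.Injective L := fun a b hab => hu (by simp [hab])
    exact absurd (LinearMap.finrank_le_finrank_of_injective (f := (L : E' →ₗ[ℝ] E)) this) (by omega)

section
variable {F : Type*} [RCLike F] [MeasureSpace F] [BorelSpace F] [(volume : Measure F).IsAddHaarMeasure]

instance isAddHaar_matrix (I R : ℕ) : (volume : Measure (Fin I → Fin R → F)).IsAddHaarMeasure :=
  Measure.pi.isAddHaarMeasure _

instance isAddHaar_triple (I J K R : ℕ) : (volume : Measure ((Fin I → Fin R → F) ×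
    (Fin J → Fin R → F) × (Fin K → Fin R → F))).IsAddHaarMeasure :=
  haveI : MeasurableAdd ((Fin J → Fin R → F) × (Fin K → Fin R → F)) :=
    ContinuousAdd.measurableAdd
  haveI : (volume : Measure ((Fin J → Fin R → F) × (Fin K → Fin R → F))).IsAddHaarMeasure :=
    Measure.prod.instIsAddHaarMeasure _ _
  Measure.prod.instIsAddHaarMeasure _ _

/-- Matrices whose columns in `S` are dependent have a column `r₀ ∈ S` which is a combination of the
other columns in `S`; they are parametrised by the columns other than `r₀` and the coefficients. -/
theorem ae_linearIndepOn {I R : ℕ} (S : Finset (Fin R)) (hS : S.card ≤ I) :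
    ∀ᵐ A : Fin I → Fin R → F, LinearIndepOn F (fun r i => A i r) (S : Set (Fin R)) := by
  let g : (r₀ : S) → ({r // r ≠ r₀.1} → Fin I → F) × ({r // r ∈ S.erase r₀.1} → F) →
      (Fin I → Fin R → F) := fun r₀ x i r =>
    if h : r = r₀ then ∑ s : {r // r ∈ S.erase r₀.1}, x.2 s * x.1 ⟨s, Finset.ne_of_mem_erase s.2⟩ i
    else x.1 ⟨r, h⟩ i
  have hnull : ∀ r₀, volume (Set.range (g r₀)) = 0 := by
    intro r₀
    apply null_range _ (g r₀)
    · refine differentiable_pi.2 fun i => differentiable_pi.2 fun r => ?_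
      by_cases h : r = r₀
      · simp only [g, h, dite_true]
        fun_prop
      · simp only [g, h, dite_false]
        fun_prop
    · have hR : 0 < R := r₀.1.pos
      have h1 : 0 < S.card := Finset.card_pos.2 ⟨_, r₀.2⟩
      have hd : 0 < Module.finrank ℝ F := Module.finrank_pos
      have hc : Fintype.card {r : Fin R // r ≠ r₀.1} = R - 1 := by simp
      have hs : Fintype.card {r : Fin R // r ∈ S.erase r₀.1} = S.card - 1 := by
        rw [Fintype.card_coe, Finset.card_erase_of_mem r₀.2]
      rw [Module.finrank_prod]
      simp only [Module.finrank_pi_fintype, Finset.sum_const, Finset.card_univ, hc, hs, smul_eq_mul, Fintype.card_fin]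
      obtain ⟨R, rfl⟩ : ∃ n, R = n + 1 := ⟨R - 1, by omega⟩
      obtain ⟨s, hs⟩ : ∃ n, S.card = n + 1 := ⟨S.card - 1, by omega⟩
      rw [hs] at hS ⊢
      simp only [Nat.add_sub_cancel]
      have := Nat.mul_le_mul_right (Module.finrank ℝ F) hS
      nlinarith
  rw [ae_iff]
  refine measure_mono_null ?_ (measure_iUnion_null hnull)
  intro A hA
  rw [Set.mem_ofPred_eq, linearIndepOn_iff_notMem_span] at hA
  push Not at hA
  obtain ⟨r₀, hr₀, hmem⟩ := hA
  rw [← Finset.coe_erase, Submodule.mem_span_image_finset_iff_exists_fun] at hmem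
  obtain ⟨c, hc⟩ := hmem
  refine Set.mem_iUnion.2 ⟨⟨r₀, hr₀⟩, ⟨(fun r i => A i r, c), ?_⟩⟩
  ext i r
  by_cases h : r = r₀
  · subst h
    simpa [g] using congrFun hc i
  · simp [g, h]
end

/-! ### Triples with a contraction of small rank -/

section
variable {F : Type*} [RCLike F]

/-- Parameters `(D, x, C, y, b, μ, v)` for the triples `(A, B, C)` having a functional `f`, with
nonzero values on the columns of `C` in `S`, such that the columns of `Σ f(c_r) a_r b_rᵀ` with
index in `Q` span all of its columns. Here `D` holds the columns of `A` in `S`, `x` the rescaled coordinates of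
the other columns of `A` in terms of these, `y` the coefficients of `f`, normalised to be `1` at
`k₀`, `b` the rows of `B` in `Q`, `μ` the coefficients expressing the other columns of that matrix
through those in `Q`, and `v` the free coordinates (those outside `S`) of the resulting linear relations
between the columns of `A`. -/
abbrev DegParam (F : Type*) {I J K R : ℕ} (S : Finset (Fin R)) (Q : Finset (Fin J)) (k₀ : Fin K) :=
  (Fin I → {r // r ∈ S} → F) × ({r // r ∉ S} → {r // r ∈ S} → F) × (Fin K → Fin R → F) ×
    ({k // k ≠ k₀} → F) × ({j // j ∈ Q} → Fin R → F) × ({j // j ∉ Q} → {j // j ∈ Q} → F) ×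
    ({j // j ∉ Q} → {r // r ∉ S} → F)

/-- The value on the column `c_r` of the functional with coefficient `1` at `k₀` and `y k` at
`k ≠ k₀`. -/
def degWeight {K R : ℕ} (k₀ : Fin K) (C : Fin K → Fin R → F) (y : {k // k ≠ k₀} → F)
    (r : Fin R) : F := C k₀ r + ∑ k, y k * C k r

/-- The triple with the given parameters. The coordinates `x` are divided by the weights of the
columns in `S`, so that both the remaining columns of `A` and the entries in `S` of the relation
`Σ_r w_r v_r a_r = 0` are polynomial in the parameters. -/
def degMap {I J K R : ℕ} (S : Finset (Fin R)) (Q : Finset (Fin J)) (k₀ : Fin K) :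
    DegParam F (I := I) S Q k₀ →
      (Fin I → Fin R → F) × (Fin J → Fin R → F) × (Fin K → Fin R → F) :=
  fun ⟨D, x, C, y, b, μ, v⟩ =>
  (fun i r => if h : r ∈ S then D i ⟨r, h⟩
    else ∑ s : {r // r ∈ S}, degWeight k₀ C y s * x ⟨r, h⟩ s * D i s,
  fun j r => if h : j ∈ Q then b ⟨j, h⟩ r
    else ∑ l, μ ⟨j, h⟩ l * b l r + if h' : r ∈ S
      then -∑ s : {r // r ∉ S}, degWeight k₀ C y s * v ⟨j, h⟩ s * x s ⟨r, h'⟩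
      else v ⟨j, h⟩ ⟨r, h'⟩,
  C)

theorem differentiable_degMap {I J K R : ℕ} (S : Finset (Fin R)) (Q : Finset (Fin J)) (k₀ : Fin K) :
    Differentiable ℝ (degMap (F := F) (I := I) S Q k₀) := by
  refine Differentiable.prodMk ?_ (Differentiable.prodMk ?_ ?_)
  · refine differentiable_pi.2 fun i => differentiable_pi.2 fun r => ?_
    by_cases h : r ∈ S
    · simp only [h, dite_true]
      fun_prop
    · simp only [h, dite_false, degWeight]
      fun_prop
  · refine differentiable_pi.2 fun j => differentiable_pi.2 fun r => ?_
    by_cases h : j ∈ Q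
    · simp only [h, dite_true]
      fun_prop
    · by_cases h' : r ∈ S
      · simp only [h, h', dite_true, dite_false, degWeight]
        fun_prop
      · simp only [h, h', dite_false]
        fun_prop
  · fun_prop

theorem finrank_matrix (α β : Type) [Fintype α] [Fintype β] : Module.finrank ℝ (α → β → F) =
    Fintype.card α * (Fintype.card β * Module.finrank ℝ F) := by
  simp [Module.finrank_pi_fintype]

theorem finrank_prod7 (E₁ E₂ E₃ E₄ E₅ E₆ E₇ : Type*)
    [AddCommGroup E₁] [AddCommGroup E₂] [AddCommGroup E₃] [AddCommGroup E₄] [AddCommGroup E₅]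
    [AddCommGroup E₆] [AddCommGroup E₇] [Module ℝ E₁] [Module ℝ E₂] [Module ℝ E₃] [Module ℝ E₄]
    [Module ℝ E₅] [Module ℝ E₆] [Module ℝ E₇] [Module.Finite ℝ E₁] [Module.Finite ℝ E₂]
    [Module.Finite ℝ E₃] [Module.Finite ℝ E₄] [Module.Finite ℝ E₅] [Module.Finite ℝ E₆]
    [Module.Finite ℝ E₇] :
    Module.finrank ℝ (E₁ × E₂ × E₃ × E₄ × E₅ × E₆ × E₇) =
      Module.finrank ℝ E₁ + (Module.finrank ℝ E₂ + (Module.finrank ℝ E₃ + (Module.finrank ℝ E₄ +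
        (Module.finrank ℝ E₅ + (Module.finrank ℝ E₆ + Module.finrank ℝ E₇))))) := by
  simp only [Module.finrank_prod]

theorem finrank_degParam {I J K R m : ℕ} (S : Finset (Fin R)) (hS : S.card = I)
    (Q : Finset (Fin J)) (hQ : Q.card = m) (k₀ : Fin K) :
    Module.finrank ℝ (DegParam F (I := I) S Q k₀) =
      (I * I + (R - I) * I + K * R + (K - 1) + m * R + (J - m) * m + (J - m) * (R - I)) *
        Module.finrank ℝ F := by
  have h1 : Fintype.card {r // r ∈ S} = I := by simpa using hS
  have h2 : Fintype.card {r // r ∉ S} = R - I := by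
    rw [Fintype.card_subtype_compl, h1, Fintype.card_fin]
  have h3 : Fintype.card {j // j ∈ Q} = m := by simpa using hQ
  have h4 : Fintype.card {j // j ∉ Q} = J - m := by
    rw [Fintype.card_subtype_compl, h3, Fintype.card_fin]
  have h5 : Fintype.card {k // k ≠ k₀} = K - 1 := by simp
  have hvec : Module.finrank ℝ ({k // k ≠ k₀} → F) = (K - 1) * Module.finrank ℝ F := by
    simp [Module.finrank_pi_fintype]
  refine (finrank_prod7 _ _ _ _ _ _ _).trans ?_
  rw [hvec]
  simp only [finrank_matrix, Fintype.card_fin, h1, h2, h3, h4]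
  ring

theorem dim_count {I J K R m : ℕ} (hK0 : 0 < K) (hmI : m ≤ I) (hmJ : m ≤ J) (hIR : I ≤ R)
    (hK : K ≤ (I - m) * (J - m)) :
    I * I + (R - I) * I + K * R + (K - 1) + m * R + (J - m) * m + (J - m) * (R - I) <
      I * R + (J * R + K * R) := by
  obtain ⟨k, rfl⟩ : ∃ k, K = k + 1 := ⟨K - 1, by omega⟩
  obtain ⟨w, rfl⟩ := Nat.exists_eq_add_of_le hmI
  obtain ⟨u, rfl⟩ := Nat.exists_eq_add_of_le hmJ
  obtain ⟨ρ, rfl⟩ := Nat.exists_eq_add_of_le hIR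
  simp only [Nat.add_sub_cancel_left, Nat.add_sub_cancel] at hK ⊢
  nlinarith

/-- The dimension of the parameter space drops by `(I - m) * (J - m) - (K - 1) > 0`. -/
theorem volume_range_degMap [MeasureSpace F] [BorelSpace F] [(volume : Measure F).IsAddHaarMeasure]
    {I J K R m : ℕ} (hmI : m ≤ I) (hmJ : m ≤ J) (hIR : I ≤ R) (hK : K ≤ (I - m) * (J - m))
    (S : Finset (Fin R)) (hS : S.card = I) (Q : Finset (Fin J)) (hQ : Q.card = m) (k₀ : Fin K) :
    volume (Set.range (degMap (F := F) (I := I) S Q k₀)) = 0 := by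
  refine null_range _ _ (differentiable_degMap S Q k₀) ?_
  have hd : 0 < Module.finrank ℝ F := Module.finrank_pos
  rw [finrank_degParam S hS Q hQ k₀, Module.finrank_prod, Module.finrank_prod]
  simp only [finrank_matrix, Fintype.card_fin]
  refine (Nat.mul_lt_mul_of_pos_right (dim_count k₀.pos hmI hmJ hIR hK) hd).trans_eq ?_
  ring

open Classical in
theorem exists_spanning_finset {V : Type*} [AddCommGroup V] [Module F V] [FiniteDimensional F V]
    {J m : ℕ} (hmJ : m ≤ J) (N : Fin J → V) (W : Submodule F V) (hW : ∀ j, N j ∈ W)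
    (hm : Module.finrank F W ≤ m) :
    ∃ Q : Finset (Fin J), Q.card = m ∧ ∀ j, N j ∈ Submodule.span F (N '' Q) := by
  obtain ⟨b, -, -, hb, hli⟩ := exists_linearIndepOn_extension (K := F) (v := N)
    (linearIndepOn_empty F N) (Set.empty_subset Set.univ)
  have hcard : b.toFinset.card ≤ m := by
    refine (card_le_of_forall_mem (F := F) (v := N) (S := b.toFinset) (by simpa using hli)
      (W := W) fun i _ => hW i).trans hm
  obtain ⟨Q, hbQ, hQ⟩ := Finset.exists_superset_card_eq hcard (by simpa using hmJ)
  refine ⟨Q, hQ, fun j => ?_⟩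
  refine Submodule.span_mono (Set.image_mono ?_) (hb ⟨j, trivial, rfl⟩)
  intro i hi
  exact hbQ (by simpa using hi)

open Classical in
/-- If some `f ≠ 0` has at least `I` nonzero values on the columns of `C` and a subspace `W` of
dimension at most `m` contains the column space of `Σ f(c_r) a_r b_rᵀ`, then the triple is in the range of
some `degMap`. -/
theorem mem_range_degMap {I J K R m : ℕ} (hmJ : m ≤ J)
    (A : Fin I → Fin R → F) (B : Fin J → Fin R → F) (C : Fin K → Fin R → F)
    (hA : GenPos F (fun r i => A i r) I) (f : (Fin K → F) →ₗ[F] F) (hf : f ≠ 0)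
    (hs : I ≤ (Finset.univ.filter fun r => f (fun k => C k r) ≠ 0).card)
    (W : Submodule F (Fin I → F))
    (hW : ∀ φ : (Fin J → F) →ₗ[F] F,
      ∑ r, (f (fun k => C k r) * φ (fun j => B j r)) • (fun i => A i r) ∈ W)
    (hWm : Module.finrank F W ≤ m) :
    ∃ (S : Finset (Fin R)) (Q : Finset (Fin J)) (k₀ : Fin K), S.card = I ∧ Q.card = m ∧
      (A, B, C) ∈ Set.range (degMap (F := F) (I := I) S Q k₀) := by
  -- Scaling `f` does not change the rank of the contraction, so a nonzero coefficient may be taken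
  -- to be `1`.
  obtain ⟨k₀, hk₀⟩ : ∃ k₀, f (Pi.single k₀ 1) ≠ 0 := by
    by_contra hne
    push Not at hne
    exact hf (LinearMap.pi_ext' fun k => LinearMap.ext_ring (by simpa using hne k))
  set y : {k // k ≠ k₀} → F := fun k => f (Pi.single k.1 1) / f (Pi.single k₀ 1) with hy
  set w : Fin R → F := degWeight k₀ C y with hw
  have hfw : ∀ r, f (fun k => C k r) = f (Pi.single k₀ 1) * w r := by
    intro r
    have h1 : f (fun k => C k r) = ∑ k, C k r * f (Pi.single k 1) := by
      conv_lhs => rw [pi_eq_sum_univ' (fun k => C k r)]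
      simp [map_sum]
    rw [h1, hw, degWeight, Fintype.sum_eq_add_sum_subtype_ne _ k₀, mul_add, Finset.mul_sum]
    congr 1
    · ring
    · refine Finset.sum_congr rfl fun k _ => ?_
      simp only [hy]
      field_simp
  obtain ⟨S, hSsub, hS⟩ := Finset.exists_subset_card_eq hs
  have hwS : ∀ s ∈ S, w s ≠ 0 := by
    intro s hs'
    have := hSsub hs'
    simp only [Finset.mem_filter, hfw] at this
    exact right_ne_zero_of_mul this.2
  set N : Fin J → Fin I → F := fun j => ∑ r, (w r * B j r) • (fun i => A i r) with hN
  have hNW : ∀ j, N j ∈ W := by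
    intro j
    have := hW (LinearMap.proj j)
    simp only [hfw, LinearMap.proj_apply, mul_assoc] at this
    simp only [← smul_smul, ← Finset.smul_sum] at this
    have := (W.smul_mem_iff hk₀).1 this
    simpa only [hN, ← smul_smul] using this
  obtain ⟨Q, hQ, hQs⟩ := exists_spanning_finset hmJ N W hNW hWm
  have hμ : ∀ j, ∃ μ : Q → F, ∑ l, μ l • N l = N j := fun j =>
    (Submodule.mem_span_image_finset_iff_exists_fun F).1 (hQs j)
  choose μ hμ using hμ
  have hspan : ∀ r, (fun i => A i r) ∈ Submodule.span F ((fun r i => A i r) '' (S : Set (Fin R))) := by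
    have htop : Submodule.span F ((fun r i => A i r) '' (S : Set (Fin R))) = ⊤ := by
      apply Submodule.eq_top_of_finrank_eq
      rw [finrank_span_image_eq (hA S hS.le), hS]
      simp
    intro r
    rw [htop]
    trivial
  have hx : ∀ r, ∃ x : S → F, ∑ s : S, x s • (fun i => A i s) = fun i => A i r := fun r =>
    (Submodule.mem_span_image_finset_iff_exists_fun F).1 (hspan r)
  choose x hx using hx
  set v : Fin J → Fin R → F := fun j r => B j r - ∑ l, μ j l * B l r with hv
  have hker : ∀ j i, ∑ r, w r * v j r * A i r = 0 := by
    intro j i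
    have h1 := congrFun (hμ j) i
    simp only [hN, Finset.sum_apply, Pi.smul_apply, smul_eq_mul, Finset.mul_sum] at h1
    simp only [hv, mul_sub, sub_mul, Finset.sum_sub_distrib, ← h1, Finset.mul_sum, Finset.sum_mul]
    rw [Finset.sum_comm, sub_eq_zero]
    refine Finset.sum_congr rfl fun r _ => Finset.sum_congr rfl fun l _ => ?_
    ring
  -- The columns of `A` in `S` form a basis, so the relation `hker` determines the entries of `v j`
  -- in `S` from those outside `S`.
  have hvS : ∀ j (s : S), v j s = -∑ r : {r // r ∉ S}, w r * v j r * (x r s / w s) := by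
    intro j
    have hrel : ∑ s : S, (w s * v j s + ∑ r : {r // r ∉ S}, w r * v j r * x r s) •
        (fun i => A i s) = 0 := by
      ext i
      have h1 := hker j i
      rw [← Fintype.sum_subtype_add_sum_subtype (fun r => r ∈ S)] at h1
      have h2 : ∀ r : {r // r ∉ S}, w r * v j r * A i r =
          ∑ s : S, w r * v j r * x r s * A i s := by
        intro r
        have := congrFun (hx r) i
        simp only [Finset.sum_apply, Pi.smul_apply, smul_eq_mul] at this
        rw [← this, Finset.mul_sum]
        exact Finset.sum_congr rfl fun s _ => by ring
      simp only [h2] at h1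
      rw [Finset.sum_comm] at h1
      simp only [Finset.sum_apply, Pi.smul_apply, smul_eq_mul, Pi.zero_apply, add_mul,
        Finset.sum_mul, Finset.sum_add_distrib]
      convert h1
    intro s
    have h3 := Fintype.linearIndependent_iff.1 (hA S hS.le).linearIndependent _ hrel s
    have hws := hwS s s.2
    apply mul_left_cancel₀ hws
    rw [mul_neg, Finset.mul_sum, eq_neg_iff_add_eq_zero]
    rw [← h3]
    congr 1
    refine Finset.sum_congr rfl fun r _ => ?_
    field_simp
  refine ⟨S, Q, k₀, hS, hQ, ⟨(fun i s => A i s, fun r s => x r s / w s, C, y, fun j r => B j r,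
    fun j l => μ j l, fun j r => v j r), ?_⟩⟩
  simp only [degMap, Prod.mk.injEq]
  refine ⟨?_, ?_, trivial⟩
  · ext i r
    by_cases h : r ∈ S
    · simp [h]
    · simp only [h, dite_false]
      rw [← congrFun (hx r) i]
      simp only [Finset.sum_apply, Pi.smul_apply, smul_eq_mul]
      refine Finset.sum_congr rfl fun s _ => ?_
      have hws := hwS s s.2
      rw [← hw]
      field_simp
  · ext j r
    by_cases h : j ∈ Q
    · simp [h]
    · simp only [h, dite_false]
      have hB : B j r = ∑ l, μ j l * B l r + v j r := by simp [hv]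
      rw [hB]
      congr 1
      by_cases h' : r ∈ S
      · simp only [h', dite_true]
        rw [← hw]
        exact (hvS j ⟨r, h'⟩).symm
      · simp only [h', dite_false]
end

/-! ### Uniqueness for generic triples -/

section
variable {F : Type*} [RCLike F]

theorem contraction_apply {I J K : ℕ} {ι : Type*} [Fintype ι]
    (a : ι → Fin I → F) (b : ι → Fin J → F) (c : ι → Fin K → F)
    (f : (Fin K → F) →ₗ[F] F) (φ : (Fin J → F) →ₗ[F] F) (i : Fin I) :
    (∑ r, (f (c r) * φ (b r)) • a r) i =
      ∑ k, ∑ j, f (Pi.single k 1) * φ (Pi.single j 1) * ∑ r, a r i * b r j * c r k := by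
  have hf : ∀ x : Fin K → F, f x = ∑ k, x k * f (Pi.single k 1) := fun x => by
    conv_lhs => rw [pi_eq_sum_univ' x]
    simp [map_sum]
  have hφ : ∀ x : Fin J → F, φ x = ∑ k, x k * φ (Pi.single k 1) := fun x => by
    conv_lhs => rw [pi_eq_sum_univ' x]
    simp [map_sum]
  simp only [Finset.sum_apply, Pi.smul_apply, smul_eq_mul, hf (c _), hφ (b _), Finset.sum_mul_sum]
  simp only [Finset.mul_sum, Finset.sum_mul]
  rw [Finset.sum_comm]
  refine Finset.sum_congr rfl fun k _ => ?_
  rw [Finset.sum_comm]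
  exact Finset.sum_congr rfl fun j _ => Finset.sum_congr rfl fun r _ => by ring

/-- Equal tensors have equal contractions by a functional on each of the last two factors. -/
theorem contractions_eq {I J K : ℕ} {ι ι' : Type*} [Fintype ι] [Fintype ι']
    {a : ι → Fin I → F} {b : ι → Fin J → F} {c : ι → Fin K → F}
    {a' : ι' → Fin I → F} {b' : ι' → Fin J → F} {c' : ι' → Fin K → F}
    (h : ∀ i j k, ∑ r, a r i * b r j * c r k = ∑ r, a' r i * b' r j * c' r k)
    (f : (Fin K → F) →ₗ[F] F) (φ : (Fin J → F) →ₗ[F] F) :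
    ∑ r, (f (c r) * φ (b r)) • a r = ∑ r, (f (c' r) * φ (b' r)) • a' r := by
  ext i
  rw [contraction_apply, contraction_apply]
  simp only [h]

/-- The minimality in `tensorRank` is used only through `tensorRank ≤ R`: it is enough to compare with
decompositions into at most `R` terms. -/
theorem cpdUnique_of_forall {I J K R : ℕ} {A : Fin I → Fin R → F} {B : Fin J → Fin R → F}
    {C : Fin K → Fin R → F} (hPD : IsPD (cpdSum A B C) R (fun r i => A i r) (fun r j => B j r)
      (fun r k => C k r))
    (h : ∀ (R' : ℕ) (a' : Fin R' → Fin I → F) (b' : Fin R' → Fin J → F) (c' : Fin R' → Fin K → F),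
      R' ≤ R → IsPD (cpdSum A B C) R' a' b' c' →
      ∃ e : Fin R' ≃ Fin R, ∀ r i j k, a' r i * b' r j * c' r k =
        A i (e r) * B j (e r) * C k (e r)) :
    CPDUnique (cpdSum A B C) := by
  have hle : tensorRank (cpdSum A B C) ≤ R := Nat.sInf_le ⟨_, _, _, hPD⟩
  intro a a' b b' c c' h1 h2
  obtain ⟨e, he⟩ := h _ a b c hle h1
  obtain ⟨e', he'⟩ := h _ a' b' c' hle h2
  refine ⟨e.trans e'.symm, fun r i j k => ?_⟩
  rw [he, he']
  simp

open Classical in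
theorem cpdUnique_of_generic {I J K R m : ℕ} (hm : R + 1 = K + m) (hm1 : 1 ≤ m) (h2 : 2 ≤ K)
    (hmI : m + 1 ≤ I) (hIJ : I ≤ J)
    {A : Fin I → Fin R → F} {B : Fin J → Fin R → F} {C : Fin K → Fin R → F}
    (hA : GenPos F (fun r i => A i r) I) (hB : GenPos F (fun r j => B j r) J)
    (hC : GenPos F (fun r k => C k r) K)
    (hG : ∀ f : (Fin K → F) →ₗ[F] F, f ≠ 0 →
      I ≤ (Finset.univ.filter fun r => f (fun k => C k r) ≠ 0).card →
      ∀ W : Submodule F (Fin I → F), (∀ φ : (Fin J → F) →ₗ[F] F,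
        ∑ r, (f (fun k => C k r) * φ (fun j => B j r)) • (fun i => A i r) ∈ W) →
        m < Module.finrank F W) :
    CPDUnique (cpdSum A B C) := by
  refine cpdUnique_of_forall ⟨fun r => ?_, fun r => ?_, fun r => ?_, fun i j k => rfl⟩ ?_
  · exact (hA {r} (by simp; omega)).ne_zero (i := r) (by simp)
  · exact (hB {r} (by simp; omega)).ne_zero (i := r) (by simp)
  · exact (hC {r} (by simp; omega)).ne_zero (i := r) (by simp)
  intro R' a' b' c' hR' hPD
  have hT : ∀ i j k, ∑ r, A i r * B j r * C k r = ∑ r, a' r i * b' r j * c' r k := hPD.2.2.2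
  have key := decomposition_unique (F := F) (a := fun r i => A i r) (b := fun r j => B j r)
    (c := fun r k => C k r) (a' := a') (b' := b') (c' := c') (m := m)
    (by simpa using hm) hm1 (by simpa using h2) (by simpa using hmI) (by simpa using hIJ)
    (by simpa using hR') (by simpa using hA) (by simpa using hB) (by simpa using hC)
    (by simpa using hG) (contractions_eq hT)
    (contractions_eq (fun j i k => by simpa only [mul_comm (A _ _), mul_comm (a' _ _)] using hT i j k))
  obtain ⟨e, he⟩ := key
  refine ⟨e, fun r i j k => ?_⟩
  obtain ⟨α, β, t, h3, h4, h5, h6⟩ := he r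
  rw [h3, h4, h5]
  simp only [Pi.smul_apply, smul_eq_mul]
  linear_combination (A i (e r) * B j (e r) * C k (e r)) * h6

theorem generically_unique [MeasureSpace F] [BorelSpace F] [(volume : Measure F).IsAddHaarMeasure]
    {I J K R m : ℕ} (hm : R + 1 = K + m) (hm1 : 1 ≤ m) (h2 : 2 ≤ K) (hmI : m + 1 ≤ I)
    (hIJ : I ≤ J) (hIR : I ≤ R) (hK : K ≤ (I - m) * (J - m)) : CPDGenericallyUnique F I J K R := by
  classical
  have hgen : ∀ n : ℕ, ∀ᵐ A : Fin n → Fin R → F, GenPos F (fun r i => A i r) n := by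
    intro n
    have : ∀ S : Finset (Fin R), ∀ᵐ A : Fin n → Fin R → F,
        S.card ≤ n → LinearIndepOn F (fun r i => A i r) (S : Set (Fin R)) := by
      intro S
      by_cases hS : S.card ≤ n
      · filter_upwards [ae_linearIndepOn (F := F) S hS] with A hA _ using hA
      · exact Filter.Eventually.of_forall fun A h => absurd h hS
    exact ae_all_iff.2 this
  have hA : ∀ᵐ p : (Fin I → Fin R → F) × (Fin J → Fin R → F) × (Fin K → Fin R → F),
      GenPos F (fun r i => p.1 i r) I := Measure.quasiMeasurePreserving_fst.ae (hgen I)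
  have hB : ∀ᵐ p : (Fin I → Fin R → F) × (Fin J → Fin R → F) × (Fin K → Fin R → F),
      GenPos F (fun r i => p.2.1 i r) J :=
    (Measure.quasiMeasurePreserving_fst.comp Measure.quasiMeasurePreserving_snd).ae (hgen J)
  have hC : ∀ᵐ p : (Fin I → Fin R → F) × (Fin J → Fin R → F) × (Fin K → Fin R → F),
      GenPos F (fun r i => p.2.2 i r) K :=
    (Measure.quasiMeasurePreserving_snd.comp Measure.quasiMeasurePreserving_snd).ae (hgen K)
  have hD : ∀ᵐ p : (Fin I → Fin R → F) × (Fin J → Fin R → F) × (Fin K → Fin R → F),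
      ∀ (S : {S : Finset (Fin R) // S.card = I}) (Q : {Q : Finset (Fin J) // Q.card = m})
        (k₀ : Fin K), p ∉ Set.range (degMap (F := F) (I := I) S.1 Q.1 k₀) := by
    refine ae_all_iff.2 fun S => ae_all_iff.2 fun Q => ae_all_iff.2 fun k₀ => ?_
    exact measure_eq_zero_iff_ae_notMem.1
      (volume_range_degMap (by omega) (by omega) hIR hK S.1 S.2 Q.1 Q.2 k₀)
  change ∀ᵐ p : (Fin I → Fin R → F) × (Fin J → Fin R → F) × (Fin K → Fin R → F),
    CPDUnique (cpdSum p.1 p.2.1 p.2.2)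
  filter_upwards [hA, hB, hC, hD] with p hA hB hC hD
  refine cpdUnique_of_generic hm hm1 h2 hmI hIJ hA hB hC fun f hf hs W hW => ?_
  by_contra hWm
  obtain ⟨S, Q, k₀, hS, hQ, hmem⟩ := mem_range_degMap (m := m) (by omega) p.1 p.2.1 p.2.2 hA f hf hs
    W hW (not_lt.1 hWm)
  exact hD ⟨S, hS⟩ ⟨Q, hQ⟩ k₀ hmem
end

/-- The square-root bound, rewritten as a polynomial inequality in `m = R - K + 1`. -/
theorem card_bound {I J K R m : ℕ} (hK2 : 2 ≤ K) (hIJ : I ≤ J) (hm : R + 1 = K + m)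
    (hR : (R : ℝ) ≤
      ((I : ℝ) + (J : ℝ) + 2 * (K : ℝ) - 2 -
        Real.sqrt (((I : ℝ) - (J : ℝ)) ^ 2 + 4 * (K : ℝ))) / 2) :
    m + 1 ≤ I ∧ K ≤ (I - m) * (J - m) := by
  have hm' : (R : ℝ) + 1 = K + m := by exact_mod_cast hm
  have hK0 : (2 : ℝ) ≤ K := by exact_mod_cast hK2
  have hIJ' : (I : ℝ) ≤ J := by exact_mod_cast hIJ
  have h0 := Real.sqrt_nonneg (((I : ℝ) - (J : ℝ)) ^ 2 + 4 * (K : ℝ))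
  have hle : Real.sqrt (((I : ℝ) - (J : ℝ)) ^ 2 + 4 * (K : ℝ)) ≤ (I - m) + (J - m) := by linarith
  have hsq := (Real.sqrt_le_left (h0.trans hle)).1 hle
  have hprod : (K : ℝ) ≤ (I - m) * (J - m) := by nlinarith
  have hpos : (m : ℝ) < I := by
    by_contra hlt
    have : (I : ℝ) - m ≤ 0 := by linarith
    nlinarith
  have hmI : m < I := by exact_mod_cast hpos
  refine ⟨hmI, ?_⟩
  have h1 : ((I - m : ℕ) : ℝ) = I - m := Nat.cast_sub hmI.le
  have h2 : ((J - m : ℕ) : ℝ) = J - m := Nat.cast_sub (hmI.le.trans hIJ)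
  rw [← h1, ← h2] at hprod
  exact_mod_cast hprod

/-- If `2 ≤ I ≤ J ≤ K ≤ R` and
`R ≤ (I + J + 2K − 2 − √((I−J)² + 4K))/2`, then for `F = ℝ` and `F = ℂ` the CPD of an
`I×J×K` tensor of rank `R` is generically unique. -/
theorem statement0 (I J K R : ℕ) (hI : 2 ≤ I) (hIJ : I ≤ J) (hJK : J ≤ K) (hKR : K ≤ R)
    (hR : (R : ℝ) ≤
      ((I : ℝ) + (J : ℝ) + 2 * (K : ℝ) - 2 -
        Real.sqrt (((I : ℝ) - (J : ℝ)) ^ 2 + 4 * (K : ℝ))) / 2) :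
    CPDGenericallyUnique ℝ I J K R ∧ CPDGenericallyUnique ℂ I J K R := by
  obtain ⟨m, hm⟩ : ∃ m, R + 1 = K + m := ⟨R + 1 - K, by omega⟩
  obtain ⟨hmI, hK⟩ := card_bound (by omega) hIJ hm hR
  exact ⟨generically_unique hm (by omega) (by omega) hmI hIJ (by omega) hK,
    generically_unique hm (by omega) (by omega) hmI hIJ (by omega) hK⟩
end
end

section
/- Let I, R, K be integers with 4 ≤ I < R ≤ K and R ≤ (I² − I)/2. Then, for F = ℝ and for F = ℂ, the SFS-CPD of an I×I×K SFS-tensor of SFS-rank R is generically unique; that is, the set {(A,C) ∈ F^{I×R}×F^{K×R} : the SFS-CPD of the tensor [A,A,C]_R is not unique} has Lebesgue measure zero. -/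
/-!
The entries of almost every pair `(A, C)` are algebraically independent over `ℚ` (separately for `A`
and for `C`), because a countable union of zero sets of nonzero polynomials is null. For such a pair
the uniqueness is proved by pure algebra.

The core is `proportional_of_mem_span`: if `R ≤ I(I-1)/2` and a nonzero rank-1 matrix `x xᵀ` equals
`∑_{r ∈ S} c_r a_r a_rᵀ` with all `c_r ≠ 0`, then `x` is proportional to some `a_r`. If `#S ≤ I`,
the columns in `S` are linearly independent and this is elementary. Otherwise a count of
transcendence degrees excludes the relation. Choose `I` of the columns in `S` as a basis `P`
and put `y = P⁻¹ x`; the remaining `m = #S - I` columns become an `I × m` matrix `D`. The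
off-diagonal part of the relation reads `y_i y_j = ∑_k μ_k D_{ik} D_{jk}`, with `y` normalised to
have one entry equal to `1`. All rows of `D` but the one at that entry are linearly independent, so
for the `j`-th row these are `j - 1` independent linear equations with coefficients in the field
generated by `y`, `μ` and the earlier rows; Cramer's rule saves `j - 1` generators
(`row_step`, `rows_generated`). Altogether the `I² + I m` algebraically independent entries of the
columns in `S` lie in a field with at most `I² + (I - 1) + m + I m - I(I-1)/2` generators, which
forces `I(I-1)/2 ≤ #S - 1`, a contradiction.

It follows that the matrices `a_r a_rᵀ` are linearly independent. Since `C` has full column rank,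
they lie in the span of the rank-1 matrices of any other decomposition with at most `R` terms, so
the two spans agree and the core result matches the terms (`exists_equiv_of_isSfsPD`).
-/


open MeasureTheory

noncomputable section

/-- The SFS-tensor `[A,A,C]_R` with entries `t_{ijk} = Σ_r A i r * A j r * C k r`. -/
def sfsSum {F : Type*} [CommRing F] {I K R : ℕ}
    (A : Fin I → Fin R → F) (C : Fin K → Fin R → F) :
    Fin I → Fin I → Fin K → F :=
  fun i j k => ∑ r : Fin R, A i r * A j r * C k r

/-- `T` is the sum of the `R` SFS rank-1 terms `a_r ∘ a_r ∘ c_r` with all vectors nonzero. -/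
def IsSfsPD {F : Type*} [CommRing F] {I K : ℕ} (T : Fin I → Fin I → Fin K → F) (R : ℕ)
    (a : Fin R → Fin I → F) (c : Fin R → Fin K → F) : Prop :=
  (∀ r, a r ≠ 0) ∧ (∀ r, c r ≠ 0) ∧
    ∀ i j k, T i j k = ∑ r : Fin R, a r i * a r j * c r k

/-- The SFS-rank of an SFS-tensor: the minimal number of SFS rank-1 terms. -/
def sfsRank {F : Type*} [CommRing F] {I K : ℕ} (T : Fin I → Fin I → Fin K → F) : ℕ :=
  sInf {R | ∃ a c, IsSfsPD T R a c}

/-- The SFS-CPD of `T` is unique: any two decompositions of `T` into `sfsRank T`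
SFS rank-1 terms coincide up to permutation of the SFS rank-1 terms. -/
def SfsCPDUnique {F : Type*} [CommRing F] {I K : ℕ} (T : Fin I → Fin I → Fin K → F) : Prop :=
  ∀ (a a' : Fin (sfsRank T) → Fin I → F) (c c' : Fin (sfsRank T) → Fin K → F),
    IsSfsPD T (sfsRank T) a c → IsSfsPD T (sfsRank T) a' c' →
    ∃ σ : Equiv.Perm (Fin (sfsRank T)),
      ∀ r i j k, a r i * a r j * c r k = a' (σ r) i * a' (σ r) j * c' (σ r) k

/-- The SFS-CPD of an `I×I×K` SFS-tensor of SFS-rank `R` is generically unique over `F`: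
the set of pairs `(A,C)` for which the SFS-CPD of `[A,A,C]_R` is not unique has
Lebesgue measure zero. -/
def SFSGenericallyUnique (F : Type*) [CommRing F] [MeasureSpace F] (I K R : ℕ) : Prop :=
  volume {p : (Fin I → Fin R → F) × (Fin K → Fin R → F) |
    ¬ SfsCPDUnique (sfsSum p.1 p.2)} = 0


/-! ### A minor of a full-rank matrix -/

/-- A matrix with linearly independent rows has a nonvanishing maximal minor. -/
theorem exists_cols {F J M : Type*} [Field F] [Fintype J] [DecidableEq J] [Fintype M] (B : J → M → F)
    (h : LinearIndependent F B) :
    ∃ e : J → M, e.Injective ∧ (Matrix.of fun i j => B i (e j)).det ≠ 0 := by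
  obtain ⟨κ, a, ha, hspan, hli⟩ := exists_linearIndependent' F (fun m => fun j => B j m)
  have : Finite κ := Finite.of_injective a ha
  have := Fintype.ofFinite κ
  have hrank : (Matrix.of B).rank = Fintype.card J := LinearIndependent.rank_matrix h
  have hc : Fintype.card κ = Fintype.card J := by
    rw [← hrank, Matrix.rank_eq_finrank_span_cols, ← finrank_span_eq_card hli, hspan]
    rfl
  let e := Fintype.equivOfCardEq hc
  refine ⟨a ∘ e.symm, ha.comp e.symm.injective, ?_⟩
  have hli2 := hli.comp e.symm e.symm.injective
  have hU : IsUnit (Matrix.of fun i j => B i (a (e.symm j))) := by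
    rw [← Matrix.linearIndependent_cols_iff_isUnit]
    exact hli2
  exact ((Matrix.isUnit_iff_isUnit_det _).1 hU).ne_zero

/-! ### Generic points have algebraically independent coordinates -/

section Generic

variable {F : Type*} [Field F]

/-- Zero sets of nonzero polynomials are null: by Fubini, since outside the zeros of the leading
coefficient in the first variable every fibre is finite. -/
theorem ae_eval_ne_zero [MeasureSpace F] [TopologicalSpace F] [IsTopologicalRing F]
    [BorelSpace F] [SecondCountableTopology F] [T1Space F]
    [SigmaFinite (volume : Measure F)] [NullSingletonClass (volume : Measure F)] :
    ∀ (n : ℕ) (p : MvPolynomial (Fin n) F), p ≠ 0 →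
      ∀ᵐ x : Fin n → F, MvPolynomial.eval x p ≠ 0 := by
  intro n
  induction n with
  | zero =>
    intro p hp
    refine Filter.Eventually.of_forall fun x hx => hp ?_
    rw [MvPolynomial.eq_C_of_isEmpty p] at hx ⊢
    simpa using hx
  | succ n ih =>
    intro p hp
    have hq : MvPolynomial.finSuccEquiv F n p ≠ 0 := by simpa using hp
    have hcons : ∀ᵐ z : F × (Fin n → F),
        MvPolynomial.eval (Fin.cons z.1 z.2 : Fin (n + 1) → F) p ≠ 0 := by
      have hcont : Continuous fun z : F × (Fin n → F) =>
          MvPolynomial.eval (Fin.cons z.1 z.2 : Fin (n + 1) → F) p :=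
        (MvPolynomial.continuous_eval p).comp
          (Continuous.finCons continuous_fst continuous_snd)
      have hmeas : MeasurableSet {z : F × (Fin n → F) |
          MvPolynomial.eval (Fin.cons z.1 z.2 : Fin (n + 1) → F) p ≠ 0} :=
        (isOpen_compl_singleton.preimage hcont).measurableSet
      refine (Measure.ae_prod_iff_ae_ae hmeas).2 ((Measure.ae_ae_comm hmeas).2 ?_)
      filter_upwards [ih _ (Polynomial.leadingCoeff_ne_zero.2 hq)] with y hy
      have hne : Polynomial.map (MvPolynomial.eval y) (MvPolynomial.finSuccEquiv F n p) ≠ 0 := by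
        intro h0
        apply hy
        have := congrArg (fun q => Polynomial.coeff q
          (MvPolynomial.finSuccEquiv F n p).natDegree) h0
        simpa [Polynomial.coeff_map] using this
      have hfin := Polynomial.finite_setOfPred_isRoot hne
      refine measure_mono_null (fun x hx => ?_) (hfin.measure_zero volume)
      simpa [MvPolynomial.eval_eq_eval_mv_eval', Polynomial.IsRoot] using hx
    have hpres := (volume_preserving_piFinSuccAbove (fun _ : Fin (n + 1) => F) 0)
    filter_upwards [hpres.quasiMeasurePreserving.ae hcons] with x hx
    simpa [MeasurableEquiv.piFinSuccAbove, Fin.cons_self_tail] using hx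

variable [CharZero F]

theorem ae_algebraicIndependent_fin [MeasureSpace F] [TopologicalSpace F] [IsTopologicalRing F]
    [BorelSpace F] [SecondCountableTopology F] [T1Space F]
    [SigmaFinite (volume : Measure F)] [NullSingletonClass (volume : Measure F)] (n : ℕ) :
    ∀ᵐ x : Fin n → F, AlgebraicIndependent ℚ x := by
  have h : ∀ᵐ x : Fin n → F, ∀ p : MvPolynomial (Fin n) ℚ, p ≠ 0 →
      MvPolynomial.eval x (MvPolynomial.map (algebraMap ℚ F) p) ≠ 0 := by
    have : Countable (MvPolynomial (Fin n) ℚ) := by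
      rw [← Cardinal.mk_le_aleph0_iff]
      refine MvPolynomial.cardinalMk_le_max.trans ?_
      simp
    rw [ae_all_iff]
    intro p
    by_cases hp : p = 0
    · simp [hp]
    · have := ae_eval_ne_zero n (MvPolynomial.map (algebraMap ℚ F) p)
        (fun h0 => hp (MvPolynomial.map_injective _ (algebraMap ℚ F).injective
          (h0.trans (map_zero _).symm)))
      filter_upwards [this] with x hx _ using hx
  filter_upwards [h] with x hx
  rw [algebraicIndependent_iff]
  intro p hp
  by_contra h0
  apply hx p h0
  rwa [MvPolynomial.eval_map, ← MvPolynomial.aeval_def]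

theorem ae_algebraicIndependent_matrix [MeasureSpace F] [TopologicalSpace F] [IsTopologicalRing F]
    [BorelSpace F] [SecondCountableTopology F] [T1Space F]
    [SigmaFinite (volume : Measure F)] [NullSingletonClass (volume : Measure F)] (m n : ℕ) :
    ∀ᵐ A : Fin m → Fin n → F,
      AlgebraicIndependent ℚ (fun p : Fin m × Fin n => A p.1 p.2) := by
  have hpres : MeasurePreserving
      (fun (A : Fin m → Fin n → F) (k : Fin (m * n)) =>
        A (finProdFinEquiv.symm k).1 (finProdFinEquiv.symm k).2) := by
    refine ⟨by fun_prop, (Measure.pi_eq fun s hs => ?_).symm⟩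
    rw [Measure.map_apply (by fun_prop) (MeasurableSet.univ_pi hs)]
    have : (fun (A : Fin m → Fin n → F) (k : Fin (m * n)) =>
        A (finProdFinEquiv.symm k).1 (finProdFinEquiv.symm k).2) ⁻¹' (Set.univ.pi s) =
        Set.univ.pi fun i => Set.univ.pi fun j => s (finProdFinEquiv (i, j)) := by
      ext A
      simp only [Set.mem_preimage, Set.mem_pi, Set.mem_univ, true_imp_iff]
      constructor
      · intro h i j
        simpa using h (finProdFinEquiv (i, j))
      · intro h k
        have := h (finProdFinEquiv.symm k).1 (finProdFinEquiv.symm k).2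
        rwa [Prod.mk.eta, Equiv.apply_symm_apply] at this
    rw [this, volume_pi_pi]
    simp_rw [volume_pi_pi]
    rw [← Fintype.prod_prod_type' (fun i j => volume (s (finProdFinEquiv (i, j))))]
    exact Fintype.prod_equiv finProdFinEquiv _ _ (fun _ => rfl)
  filter_upwards [hpres.quasiMeasurePreserving.ae (ae_algebraicIndependent_fin (m * n))] with A hA
  have := hA.comp finProdFinEquiv finProdFinEquiv.injective
  convert this using 2 with p
  rw [Function.comp_apply, Equiv.symm_apply_apply]

/-! ### Algebraic independence and generated subfields -/

/-- Steinitz bound: algebraically independent elements of a field with generators `T` number at most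
`#T`. It is read off from the rank function of the matroid of algebraic independence. -/
theorem card_le_of_mem_adjoin {ι : Type*} [Fintype ι] {v : ι → F}
    (hv : AlgebraicIndependent ℚ v) (T : Finset F)
    (h : ∀ i, v i ∈ IntermediateField.adjoin ℚ (T : Set F)) : Fintype.card ι ≤ T.card := by
  have hind : (AlgebraicIndependent.matroid ℚ F).Indep (Set.range v) :=
    AlgebraicIndependent.matroid_indep_iff.2 hv.to_subtype_range
  have hsub : Set.range v ⊆ (AlgebraicIndependent.matroid ℚ F).closure (T : Set F) := by
    rw [AlgebraicIndependent.matroid_closure_eq]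
    rintro _ ⟨i, rfl⟩
    change v i ∈ Subalgebra.algebraicClosure (Algebra.adjoin ℚ (T : Set F)) F
    rw [Subalgebra.mem_algebraicClosure]
    refine IntermediateField.adjoin_induction ℚ
      (p := fun x _ => IsAlgebraic (Algebra.adjoin ℚ (T : Set F)) x) ?_ ?_ ?_ ?_ ?_ (h i)
    · exact fun x hx => isAlgebraic_algebraMap
        (⟨x, Algebra.subset_adjoin hx⟩ : Algebra.adjoin ℚ (T : Set F))
    · exact fun q => isAlgebraic_algebraMap
        (algebraMap ℚ (Algebra.adjoin ℚ (T : Set F)) q)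
    · exact fun _ _ _ _ hx hy => hx.add hy
    · exact fun _ _ hx => hx.inv
    · exact fun _ _ _ _ hx hy => hx.mul hy
  have h1 := hind.encard_le_eRk_of_subset hsub
  rw [Matroid.eRk_closure_eq] at h1
  have h2 := h1.trans (Matroid.eRk_le_encard _ _)
  rw [← Set.image_univ, hv.injective.encard_image] at h2
  simpa using h2

/-- Every minor of a matrix with algebraically independent entries is nonzero, being a value of the
determinant polynomial. -/
theorem det_ne_zero_of_algebraicIndependent {m n : Type*} {k : Type*} [Fintype k] [DecidableEq k]
    {A : m → n → F} (hA : AlgebraicIndependent ℚ (fun p : m × n => A p.1 p.2))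
    (f : k → m) (g : k → n) (hf : f.Injective) (hg : g.Injective) :
    (Matrix.of fun i j : k => A (f i) (g j)).det ≠ 0 := by
  have h1 : AlgebraicIndependent ℚ (fun p : k × k => A (f p.1) (g p.2)) :=
    hA.comp (Prod.map f g) (hf.prodMap hg)
  intro h0
  apply Matrix.det_mvPolynomialX_ne_zero k ℚ
  apply h1
  rw [map_zero, ← h0, AlgHom.map_det]
  congr 1
  exact Matrix.mvPolynomialX_mapMatrix_aeval ℚ (Matrix.of fun i j : k => A (f i) (g j))

theorem det_mem {J : Type*} [Fintype J] [DecidableEq J] (K : IntermediateField ℚ F)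
    (B : Matrix J J F) (hB : ∀ i j, B i j ∈ K) : B.det ∈ K := by
  rw [Matrix.det_apply]
  exact sum_mem fun σ _ => by
    rw [Units.smul_def]
    exact zsmul_mem (prod_mem fun i _ => hB _ _) _

/-- The solution of an invertible linear system over a subfield lies in that subfield
(Cramer's rule). -/
theorem solution_mem {J : Type*} [Fintype J] [DecidableEq J] (K : IntermediateField ℚ F)
    (B : Matrix J J F) (hB : ∀ i j, B i j ∈ K) (hdet : B.det ≠ 0) (v : J → F)
    (hv : ∀ i, ∑ j, B i j * v j ∈ K) (j : J) : v j ∈ K := by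
  have h := Matrix.det_smul_inv_mulVec_eq_cramer B (B.mulVec v) hdet.isUnit
  rw [Matrix.mulVec_mulVec, Matrix.nonsing_inv_mul _ hdet.isUnit, Matrix.one_mulVec] at h
  have hj := congrFun h j
  rw [Matrix.cramer_apply, Pi.smul_apply, smul_eq_mul] at hj
  have : v j = B.det⁻¹ * (B.updateCol j (B.mulVec v)).det := by
    rw [← hj]; field_simp
  rw [this]
  refine mul_mem (inv_mem (det_mem K B hB)) (det_mem K _ fun i k => ?_)
  rw [Matrix.updateCol_apply]
  split_ifs
  · exact hv i
  · exact hB i k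

/-! ### The transcendence degree count -/

/-- A vector `d` satisfying `#J` independent linear equations over the field generated by `T` lies in
a field with at most `#M - #J` further generators: the coordinates of `d` outside the columns of
a nonvanishing maximal minor. -/
theorem row_step {ι M : Type*} [Fintype M] (J : Finset ι) (D : ι → M → F)
    (μ : M → F) (hμ : ∀ m, μ m ≠ 0) (hli : LinearIndependent F (fun i : J => D i))
    (T : Finset F) (hD : ∀ i ∈ J, ∀ m, D i m ∈ IntermediateField.adjoin ℚ (T : Set F))
    (hμT : ∀ m, μ m ∈ IntermediateField.adjoin ℚ (T : Set F)) (d : M → F)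
    (hd : ∀ i ∈ J, ∑ m, μ m * D i m * d m ∈ IntermediateField.adjoin ℚ (T : Set F)) :
    ∃ T' : Finset F, T ⊆ T' ∧ T'.card + J.card ≤ T.card + Fintype.card M ∧
      ∀ m, d m ∈ IntermediateField.adjoin ℚ (T' : Set F) := by
  classical
  obtain ⟨e, he, hdet⟩ := exists_cols _ hli
  set E : Finset M := Finset.univ.image e with hE
  have hEc : E.card = J.card := by
    rw [hE, Finset.card_image_of_injective _ he]; simp
  refine ⟨T ∪ Eᶜ.image d, Finset.subset_union_left, ?_, ?_⟩
  · have h1 : (T ∪ Eᶜ.image d).card ≤ T.card + Eᶜ.card :=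
      (Finset.card_union_le _ _).trans (Nat.add_le_add_left Finset.card_image_le _)
    have h2 := Finset.card_add_card_compl E
    omega
  · set K := IntermediateField.adjoin ℚ ((T ∪ Eᶜ.image d : Finset F) : Set F) with hK
    have hTK : IntermediateField.adjoin ℚ (T : Set F) ≤ K :=
      IntermediateField.adjoin.mono _ _ _ (by simp)
    have hc : ∀ m, m ∉ E → d m ∈ K := fun m hm =>
      IntermediateField.subset_adjoin _ _ (by
        simp only [Finset.coe_union, Finset.coe_image]
        exact Or.inr ⟨m, by simpa using hm, rfl⟩)
    have hsol := solution_mem K (Matrix.of fun i j : J => D i (e j))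
      (fun i j => hTK (hD _ i.2 _)) hdet (fun j => μ (e j) * d (e j)) ?_
    · intro m
      by_cases hm : m ∈ E
      · obtain ⟨j, -, rfl⟩ := Finset.mem_image.1 hm
        have h1 : d (e j) = (μ (e j))⁻¹ * (μ (e j) * d (e j)) := by
          rw [inv_mul_cancel_left₀ (hμ _)]
        rw [h1]
        exact mul_mem (inv_mem (hTK (hμT _))) (hsol j)
      · exact hc m hm
    · intro i
      have h1 : ∑ m ∈ E, μ m * D i m * d m =
          ∑ j, (Matrix.of fun i j : J => D i (e j)) i j * (μ (e j) * d (e j)) := by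
        rw [hE, Finset.sum_image (fun _ _ _ _ h => he h)]
        exact Finset.sum_congr rfl fun j _ => by simp; ring
      rw [← h1]
      have h2 := Finset.sum_add_sum_compl E fun m => μ m * D i m * d m
      rw [← eq_sub_iff_add_eq] at h2
      rw [h2]
      exact sub_mem (hTK (hd i i.2)) (sum_mem fun m hm =>
        mul_mem (mul_mem (hTK (hμT m)) (hTK (hD i i.2 m))) (hc m (Finset.mem_compl.1 hm)))

/-- If `y yᵀ = diag l + D diag μ Dᵀ` with `y ≠ 0` and `l`, `μ` nowhere zero, the off-diagonal equations save
`I.choose 2` generators for the field of all entries of `D` over that of `y` and `μ`. -/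
theorem rows_generated {M : Type*} [Fintype M] {I : ℕ} (D : Fin I → M → F) (y : Fin I → F)
    (μ : M → F) (hμ : ∀ m, μ m ≠ 0) (l : Fin I → F) (hl : ∀ i, l i ≠ 0) (i0 : Fin I)
    (hy : y i0 ≠ 0)
    (heq : ∀ i j, y i * y j = (if i = j then l i else 0) + ∑ m, μ m * D i m * D j m)
    (T0 : Finset F) (hyT : ∀ i, y i ∈ IntermediateField.adjoin ℚ (T0 : Set F))
    (hμT : ∀ m, μ m ∈ IntermediateField.adjoin ℚ (T0 : Set F)) :
    ∃ T : Finset F, T0 ⊆ T ∧ T.card + I.choose 2 ≤ T0.card + I * Fintype.card M ∧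
      ∀ i m, D i m ∈ IntermediateField.adjoin ℚ (T : Set F) := by
  classical
  have hmono : ∀ {T T' : Finset F}, T ⊆ T' → IntermediateField.adjoin ℚ (T : Set F) ≤
      IntermediateField.adjoin ℚ (T' : Set F) := fun h =>
    IntermediateField.adjoin.mono _ _ _ (by exact_mod_cast h)
  -- If `uᵀ D = 0` with `u i0 = 0`, then `(u ⬝ y) y_j = u_j l_j` for all `j`; taking `j = i0` gives
  -- `u ⬝ y = 0`, and then `u = 0`.
  have hli : LinearIndependent F (fun i : (Finset.univ.erase i0 : Finset (Fin I)) => D i) := by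
    rw [Fintype.linearIndependent_iff]
    intro g hg
    set u : Fin I → F := fun i => if h : i ∈ Finset.univ.erase i0 then g ⟨i, h⟩ else 0 with hu
    have hu0 : u i0 = 0 := by simp [hu]
    have huD : ∀ m, ∑ i, u i * D i m = 0 := by
      intro m
      have h1 := congrFun hg m
      simp only [Finset.sum_apply, Pi.smul_apply, smul_eq_mul, Pi.zero_apply] at h1
      rw [← h1, ← Finset.sum_erase (a := i0) Finset.univ (by rw [hu0, zero_mul]),
        ← Finset.sum_coe_sort]
      exact Finset.sum_congr rfl fun i _ => by simp only [hu, dif_pos i.2]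
    have key : ∀ j, (∑ i, u i * y i) * y j = u j * l j := by
      intro j
      have : ∑ i, u i * (y i * y j) = u j * l j + ∑ m, μ m * D j m * ∑ i, u i * D i m := by
        simp_rw [heq, mul_add, Finset.sum_add_distrib]
        congr 1
        · simp
        · simp_rw [Finset.mul_sum]
          rw [Finset.sum_comm]
          exact Finset.sum_congr rfl fun _ _ => Finset.sum_congr rfl fun _ _ => by ring
      simp_rw [huD, mul_zero, Finset.sum_const_zero, add_zero, ← mul_assoc] at this
      rw [Finset.sum_mul, this]
    have h0 : ∑ i, u i * y i = 0 := by
      have := key i0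
      rw [hu0, zero_mul] at this
      exact (mul_eq_zero.1 this).resolve_right hy
    intro i
    have h1 := key i
    rw [h0, zero_mul] at h1
    have h2 := (mul_eq_zero.1 h1.symm).resolve_right (hl i)
    simpa only [hu, dif_pos i.2] using h2
  -- `P J`: the rows in `J` have been generated, with one generator saved per pair of rows.
  let P : Finset (Fin I) → Prop := fun J => ∃ T : Finset F, T0 ⊆ T ∧
    T.card + J.card.choose 2 ≤ T0.card + J.card * Fintype.card M ∧
    ∀ i ∈ J, ∀ m, D i m ∈ IntermediateField.adjoin ℚ (T : Set F)
  have hext : ∀ (J : Finset (Fin I)) (j : Fin I), i0 ∉ J → j ∉ J → P J → P (insert j J) := by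
    rintro J j hi0 hj ⟨T, hT0, hcard, hT⟩
    have hliJ : LinearIndependent F (fun i : J => D i) :=
      hli.comp (fun i : J => (⟨i, Finset.mem_erase.2
        ⟨fun h => hi0 (h ▸ i.2), Finset.mem_univ _⟩⟩ :
          (Finset.univ.erase i0 : Finset (Fin I))))
        (fun a b h => Subtype.ext (congrArg (fun z => z.1) h))
    obtain ⟨T', hTT', hcard', hT'⟩ := row_step J D μ hμ hliJ T hT
      (fun m => hmono hT0 (hμT m)) (D j) (fun i hi => by
        have h := heq i j
        rw [if_neg (fun hij : i = j => hj (hij ▸ hi)), zero_add] at h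
        rw [← h]
        exact hmono hT0 (mul_mem (hyT i) (hyT j)))
    refine ⟨T', hT0.trans hTT', ?_, ?_⟩
    · rw [Finset.card_insert_of_notMem hj, show (J.card + 1).choose 2 = J.card + J.card.choose 2 by
          rw [Nat.choose_succ_succ' _ 1, Nat.choose_one_right], Nat.succ_mul]
      omega
    · intro i hi
      rcases Finset.mem_insert.1 hi with rfl | hi
      · exact hT'
      · exact fun m => hmono hTT' (hT i hi m)
  have hind : ∀ J : Finset (Fin I), i0 ∉ J → P J := by
    intro J
    induction J using Finset.induction_on with
    | empty => exact fun _ => ⟨T0, Finset.Subset.refl _, by simp, by simp⟩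
    | insert j J hj ih =>
      intro h
      rw [Finset.mem_insert, not_or] at h
      exact hext J j h.2 hj (ih h.2)
  have hfin := hext (Finset.univ.erase i0) i0 (by simp) (by simp) (hind _ (by simp))
  rw [Finset.insert_erase (Finset.mem_univ _)] at hfin
  obtain ⟨T, h1, h2, h3⟩ := hfin
  exact ⟨T, h1, by simpa using h2, fun i => h3 i (Finset.mem_univ _)⟩

/-- For generic `A`, the only rank-1 matrices `x xᵀ` in the span of the `a_r a_rᵀ` are the obvious
ones. -/
theorem proportional_of_mem_span {I R : ℕ} (A : Fin I → Fin R → F)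
    (hA : AlgebraicIndependent ℚ (fun p : Fin I × Fin R => A p.1 p.2))
    (hIR : I ≤ R) (hR : R ≤ I.choose 2) (x : Fin I → F) (hx : x ≠ 0)
    (S : Finset (Fin R)) (c : Fin R → F) (hc : ∀ r ∈ S, c r ≠ 0)
    (heq : ∀ i j, x i * x j = ∑ r ∈ S, c r * (A i r * A j r)) :
    ∃ r ∈ S, ∃ t : F, t ≠ 0 ∧ ∀ i, x i = t * A i r := by
  classical
  obtain ⟨S1, hS1c, hS1⟩ : ∃ S1 : Finset (Fin R), S1.card = I ∧ (S ⊆ S1 ∨ S1 ⊆ S) := by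
    rcases le_total S.card I with h | h
    · obtain ⟨S1, h1, -, h2⟩ := Finset.exists_subsuperset_card_eq (Finset.subset_univ S) h
        (by simpa using hIR)
      exact ⟨S1, h2, Or.inl h1⟩
    · obtain ⟨S1, h1, h2⟩ := Finset.exists_subset_card_eq h
      exact ⟨S1, h2, Or.inr h1⟩
  let e : Fin I ≃ S1 := (S1.equivFinOfCardEq hS1c).symm
  let P : Matrix (Fin I) (Fin I) F := Matrix.of fun i j => A i (e j)
  have hP : IsUnit P.det := (det_ne_zero_of_algebraicIndependent hA id (fun j => (e j : Fin R))
    Function.injective_id (Subtype.val_injective.comp e.injective)).isUnit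
  let y : Fin I → F := P⁻¹.mulVec x
  let D : Fin I → Fin R → F := fun i r => ∑ k, P⁻¹ i k * A k r
  have hPy : ∀ i, x i = ∑ j, A i (e j) * y j := by
    intro i
    have : P.mulVec y = x := by
      simp only [y]
      rw [Matrix.mulVec_mulVec, Matrix.mul_nonsing_inv _ hP, Matrix.one_mulVec]
    rw [← this]
    rfl
  have hPD : ∀ i r, A i r = ∑ j, A i (e j) * D j r := by
    intro i r
    have : P * (P⁻¹ * Matrix.of A) = Matrix.of A := by
      rw [← Matrix.mul_assoc, Matrix.mul_nonsing_inv _ hP, Matrix.one_mul]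
    exact (congrFun (congrFun this i) r).symm
  have hDe : ∀ i j, D i (e j) = if i = j then 1 else 0 := by
    intro i j
    have : P⁻¹ * P = 1 := Matrix.nonsing_inv_mul _ hP
    have h := congrFun (congrFun this i) j
    rw [Matrix.one_apply] at h
    exact h
  have heq' : ∀ i j, y i * y j = ∑ r ∈ S, c r * (D i r * D j r) := by
    intro i j
    have h1 : y i * y j = ∑ k, ∑ k', P⁻¹ i k * P⁻¹ j k' * (x k * x k') := by
      simp only [y, Matrix.mulVec, dotProduct, Finset.sum_mul_sum]
      exact Finset.sum_congr rfl fun _ _ => Finset.sum_congr rfl fun _ _ => by ring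
    have h2 : ∀ r, D i r * D j r = ∑ k, ∑ k', P⁻¹ i k * P⁻¹ j k' * (A k r * A k' r) := by
      intro r
      simp only [D, Finset.sum_mul_sum]
      exact Finset.sum_congr rfl fun _ _ => Finset.sum_congr rfl fun _ _ => by ring
    rw [h1]
    simp_rw [h2, heq, Finset.mul_sum]
    simp_rw [Finset.sum_comm (s := Finset.univ) (t := S)]
    exact Finset.sum_congr rfl fun _ _ => Finset.sum_congr rfl fun _ _ =>
      Finset.sum_congr rfl fun _ _ => by ring
  obtain ⟨i0, hi0⟩ : ∃ i, y i ≠ 0 := by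
    by_contra! h
    exact hx (funext fun i => by simp [hPy, h])
  have hDe' : ∀ i, ∀ r ∈ S1, D i r ≠ 0 → r = e i := by
    intro i r hr h
    obtain ⟨j, hj⟩ := e.surjective ⟨r, hr⟩
    have hj' : r = e j := by rw [hj]
    rw [hj', hDe] at h
    have : i = j := by by_contra h0; exact h (if_neg h0)
    rw [hj', this]
  rcases hS1 with hS1 | hS1
  -- Here `S ⊆ S1`, so the columns indexed by `S` are part of the basis `P`.
  · refine ⟨e i0, ?_, y i0, hi0, ?_⟩
    · by_contra hn
      apply mul_ne_zero hi0 hi0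
      rw [heq']
      refine Finset.sum_eq_zero fun r hr => ?_
      have : D i0 r = 0 := by
        by_contra h
        exact hn (hDe' i0 r (hS1 hr) h ▸ hr)
      rw [this]; ring
    · have hz : ∀ j, j ≠ i0 → y j = 0 := by
        intro j hj
        have : y i0 * y j = 0 := by
          rw [heq']
          refine Finset.sum_eq_zero fun r hr => ?_
          by_contra h
          have h1 := hDe' i0 r (hS1 hr) (fun h0 => h (by rw [h0]; ring))
          have h2 := hDe' j r (hS1 hr) (fun h0 => h (by rw [h0]; ring))
          exact hj (e.injective (Subtype.ext (h2.symm.trans h1)))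
        exact (mul_eq_zero.1 this).resolve_left hi0
      intro i
      rw [hPy, Finset.sum_eq_single i0 (fun j _ hj => by rw [hz j hj, mul_zero]) (by simp),
        mul_comm]
  -- Here `S1 ⊆ S`: the number of generators contradicts algebraic independence. The scaling makes
  -- `z i0 = 1`, which saves one generator.
  · exfalso
    let M := {r // r ∈ S \ S1}
    have hM : Fintype.card M + I = S.card := by
      rw [← hS1c, Fintype.card_coe]
      exact Finset.card_sdiff_add_card_eq_card hS1
    have hSR : S.card ≤ R := by simpa using S.card_le_univ
    let z : Fin I → F := fun i => y i / y i0
    let μ : M → F := fun m => c m / y i0 ^ 2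
    let l : Fin I → F := fun i => c (e i) / y i0 ^ 2
    let T0 : Finset F := (Finset.univ.image fun p : Fin I × Fin I => A p.1 (e p.2)) ∪
      ((Finset.univ.erase i0).image z ∪ Finset.univ.image μ)
    have hT0 : T0.card ≤ I * I + ((I - 1) + Fintype.card M) := by
      refine (Finset.card_union_le _ _).trans (add_le_add (Finset.card_image_le.trans (by simp))
        ((Finset.card_union_le _ _).trans (add_le_add (Finset.card_image_le.trans (by simp))
          (Finset.card_image_le.trans ?_))))
      simp
    have hz : ∀ i j, z i * z j = (if i = j then l i else 0) +
        ∑ m : M, μ m * D i m * D j m := by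
      intro i j
      have h1 : z i * z j = (y i * y j) / y i0 ^ 2 := by
        simp only [z]; field_simp
      rw [h1, heq', ← Finset.sum_sdiff hS1, add_div, add_comm]
      congr 1
      · rw [← Finset.sum_coe_sort S1, ← e.sum_comp]
        simp_rw [hDe]
        by_cases hij : i = j
        · subst hij; simp [l]
        · simp [hij]
      · rw [← Finset.sum_coe_sort (S \ S1), Finset.sum_div]
        exact Finset.sum_congr rfl fun m _ => by simp only [μ]; ring
    have hzT : ∀ i, z i ∈ IntermediateField.adjoin ℚ (T0 : Set F) := by
      intro i
      by_cases hi : i = i0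
      · have : z i = 1 := by simp [z, hi, hi0]
        rw [this]; exact one_mem _
      · refine IntermediateField.subset_adjoin _ _ ?_
        exact Finset.mem_union_right _ (Finset.mem_union_left _
          (Finset.mem_image.2 ⟨i, by simp [hi], rfl⟩))
    have hμT : ∀ m, μ m ∈ IntermediateField.adjoin ℚ (T0 : Set F) := by
      intro m
      refine IntermediateField.subset_adjoin _ _ ?_
      exact Finset.mem_union_right _ (Finset.mem_union_right _
          (Finset.mem_image.2 ⟨m, by simp, rfl⟩))
    obtain ⟨T, hT0T, hcard, hT⟩ := rows_generated (fun i (m : M) => D i m) z μ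
      (fun m => div_ne_zero (hc _ (Finset.mem_sdiff.1 m.2).1) (pow_ne_zero _ hi0)) l
      (fun i => div_ne_zero (hc _ (hS1 (e i).2)) (pow_ne_zero _ hi0)) i0
      (by simp [z, hi0]) hz T0 hzT hμT
    have hmem : ∀ p : Fin I × S, A p.1 p.2 ∈ IntermediateField.adjoin ℚ (T : Set F) := by
      have hP' : ∀ i j, A i (e j) ∈ IntermediateField.adjoin ℚ (T : Set F) := fun i j =>
        IntermediateField.subset_adjoin _ _ (hT0T (by
          refine Finset.mem_union_left _ (Finset.mem_image.2 ⟨(i, j), by simp, rfl⟩)))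
      rintro ⟨i, r, hr⟩
      by_cases h : r ∈ S1
      · obtain ⟨j, hj⟩ := e.surjective ⟨r, h⟩
        have := hP' i j
        rwa [hj] at this
      · change A i r ∈ _
        rw [hPD i r]
        exact sum_mem fun j _ => mul_mem (hP' i j) (hT j ⟨r, Finset.mem_sdiff.2 ⟨hr, h⟩⟩)
    have hAS : AlgebraicIndependent ℚ (fun p : Fin I × S => A p.1 p.2) :=
      hA.comp (Prod.map id Subtype.val)
        (Function.injective_id.prodMap Subtype.val_injective)
    have hle := card_le_of_mem_adjoin hAS T hmem
    rw [Fintype.card_prod, Fintype.card_fin, Fintype.card_coe, ← hM, mul_add] at hle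
    have hIpos : 0 < I := i0.pos
    omega

/-! ### Uniqueness of the decomposition -/

/-- A nontrivial relation would express some `a_{r₀} a_{r₀}ᵀ` through the others, so `a_{r₀}` would be
proportional to another column. -/
theorem linearIndependent_rankOne {I R : ℕ} (A : Fin I → Fin R → F)
    (hA : AlgebraicIndependent ℚ (fun p : Fin I × Fin R => A p.1 p.2))
    (hI : 2 ≤ I) (hIR : I ≤ R) (hR : R ≤ I.choose 2) :
    LinearIndependent F (fun (r : Fin R) (p : Fin I × Fin I) => A p.1 r * A p.2 r) := by
  classical
  rw [Fintype.linearIndependent_iff]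
  intro g hg r0
  by_contra hr0
  have hne : ∀ r s : Fin R, r ≠ s →
      A ⟨0, by omega⟩ r * A ⟨1, by omega⟩ s - A ⟨0, by omega⟩ s * A ⟨1, by omega⟩ r ≠ 0 := by
    intro r s hrs
    have := det_ne_zero_of_algebraicIndependent hA ![⟨0, by omega⟩, ⟨1, by omega⟩] ![r, s]
      (by intro a b; fin_cases a <;> fin_cases b <;> simp)
      (by intro a b; fin_cases a <;> fin_cases b <;> simp [hrs, hrs.symm])
    rw [Matrix.det_fin_two] at this
    simpa using this
  obtain ⟨s, hs⟩ : ∃ s : Fin R, s ≠ r0 := by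
    have : Nontrivial (Fin R) := Fin.nontrivial_iff_two_le.2 (hI.trans hIR)
    exact exists_ne r0
  obtain ⟨r, hr, t, -, hrt⟩ := proportional_of_mem_span A hA hIR hR (fun i => A i r0)
    (fun h => hne r0 s hs.symm (by
      have h1 := congrFun h ⟨0, by omega⟩
      have h2 := congrFun h ⟨1, by omega⟩
      simp only [Pi.zero_apply] at h1 h2
      rw [h1, h2]; ring))
    (Finset.univ.filter fun r => r ≠ r0 ∧ g r ≠ 0) (fun r => - g r / g r0)
    (fun r hr => div_ne_zero (neg_ne_zero.2 (Finset.mem_filter.1 hr).2.2) hr0) (by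
      intro i j
      have h := congrFun hg (i, j)
      simp only [Finset.sum_apply, Pi.smul_apply, smul_eq_mul, Pi.zero_apply] at h
      rw [← Finset.add_sum_erase _ _ (Finset.mem_univ r0)] at h
      have h2 : ∑ r ∈ Finset.univ.filter (fun r => r ≠ r0 ∧ g r ≠ 0),
          - g r / g r0 * (A i r * A j r) =
          ∑ r ∈ Finset.univ.erase r0, - g r / g r0 * (A i r * A j r) := by
        refine Finset.sum_subset (fun r hr => ?_) (fun r hr hr' => ?_)
        · simpa using (Finset.mem_filter.1 hr).2.1
        · have : g r = 0 := by
            by_contra h0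
            exact hr' (by simpa [h0] using hr)
          simp [this]
      rw [h2]
      have h3 : ∑ r ∈ Finset.univ.erase r0, - g r / g r0 * (A i r * A j r) =
          - (∑ r ∈ Finset.univ.erase r0, g r * (A i r * A j r)) / g r0 := by
        rw [← Finset.sum_neg_distrib, Finset.sum_div]
        exact Finset.sum_congr rfl fun _ _ => by ring
      rw [h3, eq_div_iff hr0]
      linear_combination h)
  apply hne r0 r (Finset.mem_filter.1 hr).2.1.symm
  rw [hrt, hrt ⟨1, _⟩]
  ring

/-- Every decomposition of `[A,A,C]_R` with at most `R` terms is a relabelling of the given one. -/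
theorem exists_equiv_of_isSfsPD {I K R R' : ℕ} (A : Fin I → Fin R → F) (C : Fin K → Fin R → F)
    (hA : AlgebraicIndependent ℚ (fun p : Fin I × Fin R => A p.1 p.2))
    (hC : AlgebraicIndependent ℚ (fun p : Fin K × Fin R => C p.1 p.2))
    (hI : 2 ≤ I) (hIR : I ≤ R) (hR : R ≤ I.choose 2) (hRK : R ≤ K) (hR' : R' ≤ R)
    (a : Fin R' → Fin I → F) (c : Fin R' → Fin K → F) (h : IsSfsPD (sfsSum A C) R' a c) :
    ∃ σ : Fin R' ≃ Fin R, ∀ r i j k,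
      a r i * a r j * c r k = A i (σ r) * A j (σ r) * C k (σ r) := by
  classical
  obtain ⟨ha, -, hT⟩ := h
  simp only [sfsSum] at hT
  set M : Fin R → Fin I × Fin I → F := fun r p => A p.1 r * A p.2 r with hM
  set N : Fin R' → Fin I × Fin I → F := fun r p => a r p.1 * a r p.2 with hN
  have hli : LinearIndependent F M := linearIndependent_rankOne A hA hI hIR hR
  have hslice : ∀ k, ∑ r, C k r • M r = ∑ r, c r k • N r := by
    intro k
    ext p
    simp only [Finset.sum_apply, Pi.smul_apply, smul_eq_mul, hM, hN]
    simpa only [mul_comm] using hT p.1 p.2 k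
  let B : Matrix (Fin R) (Fin R) F := Matrix.of fun i j => C (Fin.castLE hRK i) j
  have hB : IsUnit B.det := (det_ne_zero_of_algebraicIndependent hC (Fin.castLE hRK) id
    (Fin.castLE_injective hRK) Function.injective_id).isUnit
  have hMN : ∀ r, M r = ∑ r', (∑ k, B⁻¹ r k * c r' (Fin.castLE hRK k)) • N r' := by
    intro r
    have h1 : ∑ k, B⁻¹ r k • ∑ s, B k s • M s = M r := by
      simp_rw [Finset.smul_sum, smul_smul]
      rw [Finset.sum_comm]
      simp_rw [← Finset.sum_smul]
      have h2 : ∀ s, ∑ k, B⁻¹ r k * B k s = if r = s then 1 else 0 := fun s => by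
        rw [← Matrix.one_apply, ← Matrix.nonsing_inv_mul _ hB, Matrix.mul_apply]
      simp [h2]
    rw [← h1]
    simp_rw [Finset.sum_smul]
    rw [Finset.sum_comm]
    refine Finset.sum_congr rfl fun k _ => ?_
    rw [show ∑ s, B k s • M s = ∑ s, c s (Fin.castLE hRK k) • N s from hslice _,
      Finset.smul_sum]
    simp_rw [smul_smul]
  have hspan : Submodule.span F (Set.range M) = Submodule.span F (Set.range N) := by
    refine Submodule.eq_of_le_of_finrank_le (Submodule.span_le.2 ?_) ?_
    · rintro _ ⟨r, rfl⟩
      rw [hMN r]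
      exact sum_mem fun r' _ => Submodule.smul_mem _ _ (Submodule.subset_span ⟨r', rfl⟩)
    · rw [finrank_span_eq_card hli, Fintype.card_fin]
      have := finrank_range_le_card (R := F) N
      rw [Fintype.card_fin] at this
      exact this.trans hR'
  have hprop : ∀ r', ∃ r, ∃ t : F, ∀ i, a r' i = t * A i r := by
    intro r'
    have hmem : N r' ∈ Submodule.span F (Set.range M) :=
      hspan ▸ Submodule.subset_span ⟨r', rfl⟩
    obtain ⟨g, hg⟩ := (Submodule.mem_span_range_iff_exists_fun F).1 hmem
    obtain ⟨r, -, t, -, ht⟩ := proportional_of_mem_span A hA hIR hR (a r') (ha r')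
      (Finset.univ.filter fun r => g r ≠ 0) g (fun r hr => (Finset.mem_filter.1 hr).2) (by
        intro i j
        have h1 := congrFun hg (i, j)
        simp only [Finset.sum_apply, Pi.smul_apply, smul_eq_mul, hM, hN] at h1
        rw [← h1]
        refine (Finset.sum_subset (Finset.filter_subset _ _) fun r _ hr => ?_).symm
        have : g r = 0 := by simpa using hr
        simp [this])
    exact ⟨r, t, ht⟩
  choose σ t hσ using hprop
  have hNM : ∀ r', N r' = t r' ^ 2 • M (σ r') := by
    intro r'
    ext p
    simp only [hN, hM, Pi.smul_apply, smul_eq_mul, hσ]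
    ring
  have hsurj : Function.Surjective σ := by
    intro r
    by_contra hr
    apply hli.notMem_span_image (s := Set.range σ) (x := r) hr
    rw [hMN r]
    refine sum_mem fun r' _ => Submodule.smul_mem _ _ ?_
    rw [hNM]
    exact Submodule.smul_mem _ _ (Submodule.subset_span ⟨_, ⟨r', rfl⟩, rfl⟩)
  have hbij : Function.Bijective σ := by
    rw [Fintype.bijective_iff_surjective_and_card]
    refine ⟨hsurj, le_antisymm (by simpa using hR') (Fintype.card_le_of_surjective σ hsurj)⟩
  let τ := Equiv.ofBijective σ hbij
  have hcoef : ∀ k r', C k (σ r') = c r' k * t r' ^ 2 := by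
    intro k r'
    have h1 := hslice k
    simp_rw [hNM, smul_smul] at h1
    rw [← τ.sum_comp] at h1
    have h2 : ∑ s, (C k (τ s) - c s k * t s ^ 2) • (M ∘ τ) s = 0 := by
      simp_rw [sub_smul, Finset.sum_sub_distrib]
      rw [sub_eq_zero]
      exact h1
    have h3 := Fintype.linearIndependent_iff.1 (hli.comp τ τ.injective) _ h2 r'
    exact sub_eq_zero.1 h3
  refine ⟨τ, fun r i j k => ?_⟩
  change _ = A i (σ r) * A j (σ r) * C k (σ r)
  rw [hcoef, hσ, hσ]
  ring

theorem sfsCPDUnique_of_algebraicIndependent {I K R : ℕ} (A : Fin I → Fin R → F)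
    (C : Fin K → Fin R → F)
    (hA : AlgebraicIndependent ℚ (fun p : Fin I × Fin R => A p.1 p.2))
    (hC : AlgebraicIndependent ℚ (fun p : Fin K × Fin R => C p.1 p.2))
    (hI : 2 ≤ I) (hIR : I ≤ R) (hR : R ≤ I.choose 2) (hRK : R ≤ K) :
    SfsCPDUnique (sfsSum A C) := by
  have hle : sfsRank (sfsSum A C) ≤ R := by
    refine Nat.sInf_le ⟨fun r i => A i r, fun r k => C k r, ?_, ?_, fun i j k => rfl⟩
    · intro r h
      exact hA.ne_zero (⟨0, by omega⟩, r) (congrFun h _)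
    · intro r h
      exact hC.ne_zero (⟨0, by omega⟩, r) (congrFun h _)
  intro a a' c c' h h'
  obtain ⟨σ, hσ⟩ := exists_equiv_of_isSfsPD A C hA hC hI hIR hR hRK hle a c h
  obtain ⟨σ', hσ'⟩ := exists_equiv_of_isSfsPD A C hA hC hI hIR hR hRK hle a' c' h'
  refine ⟨σ.trans σ'.symm, fun r i j k => ?_⟩
  rw [hσ, hσ']
  simp

theorem sfsGenericallyUnique [MeasureSpace F] [TopologicalSpace F] [IsTopologicalRing F]
    [BorelSpace F] [SecondCountableTopology F] [T1Space F]
    [SigmaFinite (volume : Measure F)] [NullSingletonClass (volume : Measure F)] {I K R : ℕ}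
    (hI : 2 ≤ I) (hIR : I ≤ R) (hR : R ≤ I.choose 2) (hRK : R ≤ K) :
    SFSGenericallyUnique F I K R := by
  have hA : ∀ᵐ p : (Fin I → Fin R → F) × (Fin K → Fin R → F),
      AlgebraicIndependent ℚ (fun q : Fin I × Fin R => p.1 q.1 q.2) :=
    Measure.quasiMeasurePreserving_fst.ae (ae_algebraicIndependent_matrix I R)
  have hC : ∀ᵐ p : (Fin I → Fin R → F) × (Fin K → Fin R → F),
      AlgebraicIndependent ℚ (fun q : Fin K × Fin R => p.2 q.1 q.2) :=
    Measure.quasiMeasurePreserving_snd.ae (ae_algebraicIndependent_matrix K R)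
  have h : ∀ᵐ p : (Fin I → Fin R → F) × (Fin K → Fin R → F),
      SfsCPDUnique (sfsSum p.1 p.2) := by
    filter_upwards [hA, hC] with p hpA hpC
    exact sfsCPDUnique_of_algebraicIndependent p.1 p.2 hpA hpC hI hIR hR hRK
  exact h

end Generic

/-- If `4 ≤ I < R ≤ K` and `R ≤ (I² − I)/2`, then for `F = ℝ` and `F = ℂ`
the SFS-CPD of an `I×I×K` SFS-tensor of SFS-rank `R` is generically unique. -/
theorem statement2 (I K R : ℕ) (hI : 4 ≤ I) (hIR : I < R) (hRK : R ≤ K)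
    (hR : (R : ℝ) ≤ ((I : ℝ) ^ 2 - (I : ℝ)) / 2) :
    SFSGenericallyUnique ℝ I K R ∧ SFSGenericallyUnique ℂ I K R := by
  have hR' : R ≤ I.choose 2 := by
    have h : (R : ℝ) ≤ ((I.choose 2 : ℕ) : ℝ) := by
      rw [Nat.cast_choose_two]
      linarith
    exact_mod_cast h
  exact ⟨sfsGenericallyUnique (by omega) hIR.le hR' hRK,
    sfsGenericallyUnique (by omega) hIR.le hR' hRK⟩
end
end
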